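/- arXiv:1810.05190 — 2 statements merged into one kernel-verified Lean document; each statement's English description precedes it below -/
import Mathlib

section
/- Let m, n, p, q be natural numbers. If p ≥ 2q and n ≥ q+1, then Maker has a winning strategy for the (p,q)-crossing game on Λ_{m×n}. -/
namespace CrossingGames

/-- A vertex of the square integer lattice `ℤ²`. -/
abbrev Vtx : Type := ℤ × ℤ

/-- An edge of the square integer lattice `ℤ²`, encoded as a base vertex together with a
direction: `(v, true)` is the horizontal edge joining `v = (x,y)` to `(x+1,y)`, while
`(v, false)` is the vertical edge joining `v = (x,y)` to `(x,y+1)`. -/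
abbrev Edge : Type := Vtx × Bool

/-- The two endpoints of an edge. -/
def ends (e : Edge) : Vtx × Vtx :=
  (e.1, if e.2 then (e.1.1 + 1, e.1.2) else (e.1.1, e.1.2 + 1))

/-- The edge `e` joins the vertices `u` and `v`. -/
def joins (e : Edge) (u v : Vtx) : Prop :=
  ((ends e).1 = u ∧ (ends e).2 = v) ∨ ((ends e).1 = v ∧ (ends e).2 = u)

/-- The vertex set of the grid `Λ_{m×n}`: all `(x,y) ∈ ℤ²` with `1 ≤ x ≤ m`, `1 ≤ y ≤ n`. -/
def lamVtx (m n : ℕ) : Set Vtx :=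
  {v | 1 ≤ v.1 ∧ v.1 ≤ (m : ℤ) ∧ 1 ≤ v.2 ∧ v.2 ≤ (n : ℤ)}

/-- The edge set of the grid `Λ_{m×n}`: lattice edges with both endpoints in `Λ_{m×n}`. -/
def lamEdges (m n : ℕ) : Set Edge :=
  {e | (ends e).1 ∈ lamVtx m n ∧ (ends e).2 ∈ lamVtx m n}

/-- The edge set of the board `S_{m×n}`: the grid `Λ_{m×n}` with all of its leftmost and
rightmost vertical edges deleted. -/
def sEdges (m n : ℕ) : Set Edge :=
  {e ∈ lamEdges m n | ¬ (e.2 = false ∧ (e.1.1 = 1 ∨ e.1.1 = (m : ℤ)))}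

/-- The list of consecutive pairs of a list. -/
def cp {α : Type*} (l : List α) : List (α × α) := l.zip l.tail

/-- `S` contains all the edges of a left-right crossing path of a board with `m` columns
and `n` rows: a path of edges of `S` joining a vertex `(1,y)` on the left-hand side of the
board to a vertex `(m,y')` on its right-hand side. -/
def HasCrossing (m n : ℕ) (S : Set Edge) : Prop :=
  ∃ l : List Vtx,
    (∃ v, l.head? = some v ∧ v.1 = 1) ∧
    (∃ v, l.getLast? = some v ∧ v.1 = (m : ℤ)) ∧
    (∀ v ∈ l, v ∈ lamVtx m n) ∧
    ∀ p ∈ cp l, ∃ e ∈ S, joins e p.1 p.2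

/-- A strategy: given the list of all moves played so far (oldest first), produce the
next move (a finite set of edges to claim). -/
abbrev Strategy : Type := List (Finset Edge) → Finset Edge

/-- The union of the moves sitting in positions of the given parity of a history
(`true`: positions 0, 2, 4, …; `false`: positions 1, 3, 5, …). -/
def altUnion : Bool → List (Finset Edge) → Finset Edge
  | _, [] => ∅
  | true, mv :: h => mv ∪ altUnion false h
  | false, _ :: h => altUnion true h

/-- All edges claimed by the player moving first (i.e. on even positions) in a history. -/
def firstClaimed (h : List (Finset Edge)) : Finset Edge := altUnion true h

/-- All edges claimed by the player moving second (i.e. on odd positions) in a history. -/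
def secondClaimed (h : List (Finset Edge)) : Finset Edge := altUnion false h

/-- All edges claimed so far in a history. -/
def allClaimed (h : List (Finset Edge)) : Finset Edge := h.foldr (· ∪ ·) ∅

/-- The history of moves (oldest first) after `t` full rounds, when the player moving
first uses strategy `σ` and the player moving second uses strategy `τ`. -/
def hist (σ τ : Strategy) : ℕ → List (Finset Edge)
  | 0 => []
  | t + 1 =>
    let h := hist σ τ t
    h ++ [σ h, τ (h ++ [σ h])]

/-- The move `mv` is legal on `board` after the history `h` for a player of bias `k`: it
consists of as-yet-unclaimed edges of the board, and there are exactly `k` of them, unless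
fewer than `k` unclaimed edges remain, in which case the player claims all of them. -/
def LegalMove (board : Set Edge) (h : List (Finset Edge)) (k : ℕ) (mv : Finset Edge) : Prop :=
  (↑mv : Set Edge) ⊆ board \ ↑(allClaimed h) ∧
    (mv.card = k ∨ (mv.card < k ∧ board \ ↑(allClaimed h) ⊆ (↑mv : Set Edge)))

/-- The player moving first (with bias `p`) always moves legally when playing `σ`
against `τ`. -/
def FirstLegal (board : Set Edge) (p : ℕ) (σ τ : Strategy) : Prop :=
  ∀ t, LegalMove board (hist σ τ t) p (σ (hist σ τ t))

/-- The player moving second (with bias `q`) always moves legally when playing `τ`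
against `σ`. -/
def SecondLegal (board : Set Edge) (q : ℕ) (σ τ : Strategy) : Prop :=
  ∀ t, LegalMove board (hist σ τ t ++ [σ (hist σ τ t)]) q (τ (hist σ τ t ++ [σ (hist σ τ t)]))

/-- Maker (playing first and claiming `p` edges per turn) has a winning strategy for the
Maker–Breaker game on `board` in which Breaker claims `q` edges per turn: she can
guarantee that at some point her claimed edges satisfy the winning condition `win`. -/
def MakerWins (board : Set Edge) (win : Set Edge → Prop) (p q : ℕ) : Prop :=
  ∃ σ : Strategy, ∀ τ : Strategy, SecondLegal board q σ τ →
    FirstLegal board p σ τ ∧ ∃ t, win ↑(firstClaimed (hist σ τ t))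

/-- Breaker (playing second and claiming `q` edges per turn) has a winning strategy for
the Maker–Breaker game on `board` in which Maker claims `p` edges per turn: he can
forever prevent Maker's claimed edges from satisfying the winning condition `win`. -/
def BreakerWins (board : Set Edge) (win : Set Edge → Prop) (p q : ℕ) : Prop :=
  ∃ τ : Strategy, ∀ σ : Strategy, FirstLegal board p σ τ →
    SecondLegal board q σ τ ∧ ∀ t, ¬ win ↑(firstClaimed (hist σ τ t))

/-!
Contract, in the planar dual of the grid, the dual edges of all edges claimed by Breaker. He blocks
Maker if and only if this merges the face below the grid with the face above it. Give each component
a height, in the untouched grid the row of its face, and rank the dual edges leaving it by direction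
and by the height they gain: in the untouched grid a face has exactly one exit of each of the ranks
`1`, `2`, `3`, `4` (down, left, up, right).

Maker keeps every component from having more than `i` exits of rank at most `i`, for all `i ≤ 4`.
When an edge of Breaker merges two components, the lower one is raised to the level of the higher
one, and the merged component exceeds each of these bounds by at most two; deleting its two exits of
lowest rank repairs all of them at once. This costs two edges of Maker per edge of Breaker.

The bottom component needs a separate treatment, since it swallows components without raising them.
Those of its exits through which it could climb are all deleted in every turn of Maker, and after
`k` merges in a turn of Breaker the new ones start at height at most `k`. As Breaker has only
`q < n` edges, it never reaches the top, which has height `n`.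

Once all edges are claimed, the indicator function of the top component changes only across edges of
Maker. Its differences form a conserved unit flow along these edges, and following the flow from
left to right yields a crossing.
-/

section Game

variable {board : Set Edge} {win : Set Edge → Prop} {p q : ℕ} {σ τ : Strategy}
  {hs : List (Finset Edge)} {D F : Finset Edge}

lemma allClaimed_eq_altUnion_union (b : Bool) (hs : List (Finset Edge)) :
    allClaimed hs = altUnion b hs ∪ altUnion (!b) hs := by
  induction hs generalizing b with
  | nil => rfl
  | cons F hs ih =>
    have hcons : allClaimed (F :: hs) = F ∪ allClaimed hs := rfl
    cases b
    · rw [hcons, ih true, Bool.not_false, altUnion, altUnion, Finset.union_left_comm, Bool.not_true]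
    · rw [hcons, ih false, Bool.not_true, altUnion, altUnion, Finset.union_assoc, Bool.not_false]

lemma allClaimed_eq_union (hs : List (Finset Edge)) :
    allClaimed hs = firstClaimed hs ∪ secondClaimed hs :=
  allClaimed_eq_altUnion_union true hs

lemma allClaimed_append_singleton (hs : List (Finset Edge)) (D : Finset Edge) :
    allClaimed (hs ++ [D]) = allClaimed hs ∪ D := by
  induction hs with
  | nil => simp [allClaimed]
  | cons F hs ih =>
    simp only [allClaimed, List.cons_append, List.foldr_cons] at ih ⊢
    rw [ih, Finset.union_assoc]

lemma altUnion_append {hs hs' : List (Finset Edge)} (heven : Even hs.length) (b : Bool) :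
    altUnion b (hs ++ hs') = altUnion b hs ∪ altUnion b hs' := by
  induction hs using List.twoStepInduction with
  | nil => simp [altUnion]
  | singleton F => simp at heven
  | cons_cons F F' hs ih _ =>
    have heven' : Even hs.length := by simpa [Nat.even_add_one] using heven
    cases b <;> simp [altUnion, ih heven', Finset.union_assoc]

lemma even_length_hist (σ τ : Strategy) (t : ℕ) : Even (hist σ τ t).length := by
  induction t with
  | zero => simp [hist]
  | succ t ih => simpa [hist, Nat.even_add_one] using ih

lemma firstClaimed_hist_succ (σ τ : Strategy) (t : ℕ) :
    firstClaimed (hist σ τ (t + 1)) = firstClaimed (hist σ τ t) ∪ σ (hist σ τ t) := by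
  simp [firstClaimed, hist, altUnion_append (even_length_hist σ τ t), altUnion]

lemma secondClaimed_hist_succ (σ τ : Strategy) (t : ℕ) :
    secondClaimed (hist σ τ (t + 1)) =
      secondClaimed (hist σ τ t) ∪ τ (hist σ τ t ++ [σ (hist σ τ t)]) := by
  simp [secondClaimed, hist, altUnion_append (even_length_hist σ τ t), altUnion]

lemma LegalMove.card_le (hF : LegalMove board hs p F) : F.card ≤ p :=
  hF.2.elim Eq.le fun h => h.1.le

lemma LegalMove.nonempty (hF : LegalMove board hs p F) (hp : 0 < p)
    (hboard : ¬ board ⊆ allClaimed hs) : F.Nonempty := by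
  rcases hF.2 with hcard | ⟨-, hall⟩
  · exact Finset.card_pos.1 (hcard ▸ hp)
  · obtain ⟨e, he, he'⟩ := Set.not_subset.1 hboard
    exact ⟨e, hall ⟨he, he'⟩⟩

lemma exists_legalMove_superset (hboard : board.Finite) (hD : ↑D ⊆ board \ ↑(allClaimed hs))
    (hcard : D.card ≤ p) : ∃ D', D ⊆ D' ∧ LegalMove board hs p D' := by
  have hfin : (board \ ↑(allClaimed hs)).Finite := hboard.sdiff
  have hD' : D ⊆ hfin.toFinset := by rwa [Set.Finite.subset_toFinset]
  rcases le_or_gt p hfin.toFinset.card with hp | hp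
  · obtain ⟨D', hDD', hD'U, hcard'⟩ := Finset.exists_subsuperset_card_eq hD' hcard hp
    exact ⟨D', hDD', (Set.Finite.subset_toFinset).1 hD'U, Or.inl hcard'⟩
  · exact ⟨hfin.toFinset, hD', by simp [LegalMove, hp]⟩

lemma FirstLegal.firstClaimed_subset (hσ : FirstLegal board p σ τ) (t : ℕ) :
    ↑(firstClaimed (hist σ τ t)) ⊆ board := by
  induction t with
  | zero => simp [hist, firstClaimed, altUnion]
  | succ t ih =>
    rw [firstClaimed_hist_succ, Finset.coe_union]
    exact Set.union_subset ih fun e he => ((hσ t).1 he).1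

lemma FirstLegal.exists_subset_allClaimed (hσ : FirstLegal board p σ τ) (hboard : board.Finite)
    (hp : 0 < p) : ∃ t, board ⊆ allClaimed (hist σ τ t) := by
  by_contra! hnot
  have hgrow : ∀ t, t ≤ (firstClaimed (hist σ τ t)).card := fun t => by
    induction t with
    | zero => exact Nat.zero_le _
    | succ t ih =>
      have hdisj : Disjoint (firstClaimed (hist σ τ t)) (σ (hist σ τ t)) :=
        Finset.disjoint_right.2 fun e he he' => ((hσ t).1 he).2 (by
          rw [allClaimed_eq_union]
          exact Finset.mem_union_left _ he')
      have := Finset.card_pos.2 ((hσ t).nonempty hp (hnot t))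
      rw [firstClaimed_hist_succ, Finset.card_union_of_disjoint hdisj]
      omega
  have hle := Finset.card_le_card ((Set.Finite.subset_toFinset (ht := hboard)).2
    (hσ.firstClaimed_subset (hboard.toFinset.card + 1)))
  have := hgrow (hboard.toFinset.card + 1)
  omega

/-- An invariant `Inv M B` of Maker's edges `M` and Breaker's edges `B` that Maker can restore after
every move of Breaker by claiming at most `p` edges, that more Maker edges cannot destroy, and that
makes her the winner once all edges have been claimed. -/
structure IsMakerInvariant (board : Set Edge) (win : Set Edge → Prop) (p q : ℕ)
    (Inv : Finset Edge → Finset Edge → Prop) : Prop where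
  start : Inv ∅ ∅
  mono : ∀ M M' B, M ⊆ M' → Inv M B → Inv M' B
  reply : ∀ M B F, Inv M B → ↑F ⊆ board → Disjoint F M → F.card ≤ q →
    ∃ D, ↑D ⊆ board ∧ Disjoint D (M ∪ (B ∪ F)) ∧ D.card ≤ p ∧ Inv (M ∪ D) (B ∪ F)
  win : ∀ M B, Inv M B → board ⊆ ↑(M ∪ B) → win ↑M

/-- Maker, to move after the history `hs`, has a legal move establishing the invariant. -/
def CanEstablish (board : Set Edge) (p : ℕ) (Inv : Finset Edge → Finset Edge → Prop)
    (hs : List (Finset Edge)) : Prop :=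
  ∃ D, LegalMove board hs p D ∧ Inv (firstClaimed hs ∪ D) (secondClaimed hs)

variable {Inv : Finset Edge → Finset Edge → Prop}

lemma IsMakerInvariant.canEstablish_hist_succ (hI : IsMakerInvariant board win p q Inv)
    (hboard : board.Finite) {t : ℕ}
    (hM : Inv (firstClaimed (hist σ τ t) ∪ σ (hist σ τ t)) (secondClaimed (hist σ τ t)))
    (hτ : LegalMove board (hist σ τ t ++ [σ (hist σ τ t)]) q (τ (hist σ τ t ++ [σ (hist σ τ t)]))) :
    CanEstablish board p Inv (hist σ τ (t + 1)) := by
  have hclaimed : ∀ e ∈ τ (hist σ τ t ++ [σ (hist σ τ t)]),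
      e ∉ firstClaimed (hist σ τ t) ∪ σ (hist σ τ t) := fun e he he' => (hτ.1 he).2 (by
    rw [allClaimed_append_singleton, allClaimed_eq_union]
    simp only [Finset.coe_union, Set.mem_union, Finset.mem_coe, Finset.mem_union] at he' ⊢
    tauto)
  obtain ⟨D, hD, hdisj, hcard, hinv⟩ := hI.reply _ _ _ hM (fun e he => (hτ.1 he).1)
    (Finset.disjoint_left.2 hclaimed) hτ.card_le
  rw [← firstClaimed_hist_succ, ← secondClaimed_hist_succ] at hdisj hinv
  rw [← allClaimed_eq_union] at hdisj
  obtain ⟨D', hDD', hlegal⟩ := exists_legalMove_superset (p := p) hboard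
    (fun e he => ⟨hD he, Finset.disjoint_left.1 hdisj he⟩) hcard
  exact ⟨D', hlegal, hI.mono _ _ _ (Finset.union_subset_union_right hDD') hinv⟩

lemma IsMakerInvariant.canEstablish_nil (hI : IsMakerInvariant board win p q Inv)
    (hboard : board.Finite) : CanEstablish board p Inv [] := by
  obtain ⟨D, -, hD⟩ := exists_legalMove_superset (D := ∅) (p := p) (hs := []) hboard (by simp)
    (by simp)
  exact ⟨D, hD, hI.mono _ _ _ (Finset.empty_subset _) hI.start⟩

open Classical in
theorem IsMakerInvariant.makerWins (hI : IsMakerInvariant board win p q Inv)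
    (hboard : board.Finite) (hp : 0 < p) : MakerWins board win p q := by
  refine ⟨fun hs => if hex : CanEstablish board p Inv hs then hex.choose else ∅, fun τ hτ => ?_⟩
  set σ : Strategy := fun hs => if hex : CanEstablish board p Inv hs then hex.choose else ∅
  have hσ : ∀ hs, CanEstablish board p Inv hs →
      LegalMove board hs p (σ hs) ∧ Inv (firstClaimed hs ∪ σ hs) (secondClaimed hs) := by
    intro hs hex
    simpa only [σ, dif_pos hex] using hex.choose_spec
  have hcan : ∀ t, CanEstablish board p Inv (hist σ τ t) := fun t => by
    induction t with
    | zero => exact hI.canEstablish_nil hboard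
    | succ t ih => exact hI.canEstablish_hist_succ hboard (hσ _ ih).2 (hτ t)
  have hlegal : FirstLegal board p σ τ := fun t => (hσ _ (hcan t)).1
  obtain ⟨t, ht⟩ := hlegal.exists_subset_allClaimed hboard hp
  obtain ⟨D, hD, hinv⟩ := hcan t
  have hempty : D = ∅ := Finset.eq_empty_of_forall_notMem fun e he => (hD.1 he).2 (ht (hD.1 he).1)
  rw [hempty, Finset.union_empty] at hinv
  exact ⟨hlegal, t, hI.win _ _ hinv (by rwa [← allClaimed_eq_union])⟩

end Game

section Identify

variable {V : Type*} [DecidableEq V] {A B c w : V}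

/-- The relabelling that renames `A` to `B`; composed with a labelling of vertices by components,
it merges component `A` into component `B`. -/
def identify (A B : V) : V → V := Function.update id A B

lemma identify_left : identify A B A = B := by simp [identify]

lemma identify_of_ne (hw : w ≠ A) : identify A B w = w := by simp [identify, hw]

lemma identify_eq_right_iff : identify A B w = B ↔ w = A ∨ w = B := by
  by_cases hw : w = A <;> simp [identify, hw]

lemma identify_ne_left (hAB : A ≠ B) (w : V) : identify A B w ≠ A := by
  by_cases hw : w = A <;> simp [identify, hw, hAB.symm]

lemma identify_eq_iff_of_ne (hA : c ≠ A) (hB : c ≠ B) : identify A B w = c ↔ w = c := by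
  by_cases hw : w = A <;> simp [identify, hw, hA.symm, hB.symm]

lemma count_map_identify_right (hAB : A ≠ B) (T : Multiset V) :
    (T.map (identify A B)).count B = T.count A + T.count B := by
  induction T using Multiset.induction with
  | empty => simp
  | cons w T ih =>
    simp only [Multiset.map_cons, Multiset.count_cons, ih, eq_comm (a := B),
      identify_eq_right_iff, eq_comm (a := A)]
    grind

lemma count_map_identify_of_ne (hA : c ≠ A) (hB : c ≠ B) (T : Multiset V) :
    (T.map (identify A B)).count c = T.count c := by
  induction T using Multiset.induction with
  | empty => simp
  | cons w T ih =>
    simp only [Multiset.map_cons, Multiset.count_cons, ih, eq_comm (a := c),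
      identify_eq_iff_of_ne hA hB]

end Identify

section StepRank

/-- The rank of a step of the dual graph with direction `s` that raises the height by `δ`. In an
untouched grid the four steps down, left, up and right from a face have ranks `1`, `2`, `3` and
`4`; rank `0` marks a step that descends too steeply, and Maker removes low ranks first. -/
def stepRank : SignType → ℤ → ℕ
  | .zero, δ => if δ ≤ -2 then 0 else if δ ≤ -1 then 1 else if δ ≤ 0 then 2 else 3
  | .neg, δ => if δ ≤ -1 then 0 else if δ ≤ 0 then 2 else 3
  | .pos, δ => if δ ≤ -2 then 0 else if δ ≤ -1 then 1 else 4

variable {s : SignType} {δ δ' : ℤ}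

lemma stepRank_mono (s : SignType) : Monotone (stepRank s) := by
  intro δ δ' h
  cases s <;> simp only [stepRank] <;> split_ifs <;> omega

lemma stepRank_le_four (s : SignType) (δ : ℤ) : stepRank s δ ≤ 4 := by
  cases s <;> simp only [stepRank] <;> split_ifs <;> omega

lemma stepRank_le_three (hs : s ≠ 1) (δ : ℤ) : stepRank s δ ≤ 3 := by
  cases s
  · simp only [stepRank]; split_ifs <;> omega
  · simp only [stepRank]; split_ifs <;> omega
  · exact absurd rfl hs

lemma stepRank_le_two_of_sub_one (h : stepRank s (δ - 1) = 0) : stepRank s δ ≤ 2 := by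
  cases s <;> simp only [stepRank] at h ⊢ <;> split_ifs at h ⊢ <;> omega

lemma stepRank_neg_one_le_one (s : SignType) : stepRank s (-1) ≤ 1 := by
  cases s <;> simp [stepRank]

lemma stepRank_zero_le_two_or (s : SignType) : stepRank s 0 ≤ 2 ∨ stepRank (-s) 0 ≤ 2 := by
  cases s
  · exact Or.inl (by simp [stepRank])
  · exact Or.inl (by simp [stepRank])
  · exact Or.inr (by decide)

lemma neg_one_le_of_stepRank_pos (h : 0 < stepRank s δ) : -1 ≤ δ := by
  by_contra! hδ
  cases s <;> simp only [stepRank] at h <;> split_ifs at h <;> omega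

lemma nonneg_of_stepRank_neg_pos (h : 0 < stepRank (-1) δ) : 0 ≤ δ := by
  by_contra! hδ
  have hδ' : δ ≤ -1 := by omega
  change 0 < (if δ ≤ -1 then 0 else if δ ≤ 0 then 2 else 3) at h
  rw [if_pos hδ'] at h
  exact h.false

end StepRank

/-- A directed multigraph with edge type `E` and vertex type `V` in which every edge carries a sign
(`1` for the dual edges crossing vertical edges of the grid, `0` for the others), together with two
distinguished vertices. -/
structure DualGraph (E V : Type*) where
  tail : E → V
  head : E → V
  sign : E → SignType
  bot : V
  top : V

namespace DualGraph

variable {E V : Type*} (G : DualGraph E V)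

/-- The starting vertex of a dart, an edge being traversed forwards (`true`) or backwards. -/
def src (d : E × Bool) : V := bif d.2 then G.tail d.1 else G.head d.1

/-- The final vertex of a dart. -/
def dst (d : E × Bool) : V := bif d.2 then G.head d.1 else G.tail d.1

/-- The sign of the edge of a dart, reversed when the dart runs backwards. -/
def dir (d : E × Bool) : SignType := bif d.2 then G.sign d.1 else -G.sign d.1

/-- The dart running along the same edge in the opposite direction. -/
def rev (d : E × Bool) : E × Bool := (d.1, !d.2)

@[simp] lemma src_rev (d : E × Bool) : G.src (rev d) = G.dst d := by
  rcases d with ⟨e, _ | _⟩ <;> rfl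

@[simp] lemma dst_rev (d : E × Bool) : G.dst (rev d) = G.src d := by
  rcases d with ⟨e, _ | _⟩ <;> rfl

@[simp] lemma dir_rev (d : E × Bool) : G.dir (rev d) = -G.dir d := by
  rcases d with ⟨e, _ | _⟩ <;> simp [dir, rev]

variable {G} in
lemma label_src_eq_dst_iff {d : E × Bool} {r : V → V} :
    r (G.src d) = r (G.dst d) ↔ r (G.tail d.1) = r (G.head d.1) := by
  rcases d with ⟨e, _ | _⟩
  · exact eq_comm
  · exact Iff.rfl

/-- A dart leaving the component of `bot` is harmless if it cannot help that component to climb: it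
steps sideways from height at most `1`, or upwards from height at most `0`. -/
def Harmless (h : V → ℤ) (d : E × Bool) : Prop :=
  (G.dir d = 0 ∧ h (G.src d) ≤ 0) ∨ (G.dir d = 1 ∧ h (G.src d) ≤ 1)

instance (h : V → ℤ) (d : E × Bool) : Decidable (G.Harmless h d) :=
  inferInstanceAs (Decidable (_ ∨ _))

variable {G} in
lemma height_dst_le_one_of_harmless {h : V → ℤ} {d : E × Bool} (hd : G.Harmless h d)
    (hpos : 0 < stepRank (-G.dir d) (h (G.src d) - h (G.dst d))) : h (G.dst d) ≤ 1 := by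
  rcases hd with ⟨-, hle⟩ | ⟨hdir, hle⟩
  · have := neg_one_le_of_stepRank_pos hpos
    omega
  · rw [hdir] at hpos
    have := nonneg_of_stepRank_neg_pos hpos
    omega

variable {G} in
lemma Harmless.dir_ne_neg_one {h : V → ℤ} {d : E × Bool} (hd : G.Harmless h d) :
    G.dir d ≠ -1 := by
  rcases hd with ⟨hdir, -⟩ | ⟨hdir, -⟩ <;> rw [hdir] <;> decide

variable [DecidableEq V]

/-- The rank of a dart leaving its component, where `r` labels vertices by components and `h` is
the height. Out of the component of `bot` only the distinction between harmless and harmful (rank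
`0`) darts matters. -/
def rank (r : V → V) (h : V → ℤ) (d : E × Bool) : ℕ :=
  if r (G.src d) = r G.bot then if G.Harmless h d then 1 else 0
  else stepRank (G.dir d) (h (G.dst d) - h (G.src d))

/-- The darts along edges of `O` that leave the component labelled `c`. -/
def exits (O : Finset E) (r : V → V) (c : V) : Finset (E × Bool) :=
  {d ∈ O ×ˢ Finset.univ | r (G.src d) = c ∧ r (G.dst d) ≠ c}

/-- The exits of rank at most `i`. -/
def exitsLE (O : Finset E) (r : V → V) (h : V → ℤ) (i : ℕ) (c : V) : Finset (E × Bool) :=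
  {d ∈ G.exits O r c | G.rank r h d ≤ i}

/-- The edges of `F` joining different components. -/
def separated (F : Finset E) (r : V → V) : Finset E := {e ∈ F | r (G.tail e) ≠ r (G.head e)}

/-- The pairs `(c, i)` for which the number of exits of `c` of rank at most `i` is controlled: for
the components of `bot` and `top` only exits of rank `0` are. -/
def Controlled (r : V → V) (c : V) (i : ℕ) : Prop := i ≤ 4 ∧ (c = r G.bot ∨ c = r G.top → i = 0)

/-- Every controlled component has at most `i` exits of rank at most `i`, up to one additional exit
for each occurrence of its label in `T`; the members of `T` are Maker's pending replies. -/
def Bounded (O : Finset E) (r : V → V) (h : V → ℤ) (T : Multiset V) : Prop :=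
  ∀ c i, G.Controlled r c i → (G.exitsLE O r h i c).card ≤ i + T.count c

/-- A height function of range bounded by the height `n` of `top`, constant on each component except
possibly that of `bot`, the latter being different from the component of `top`. -/
structure IsTerrain (n : ℤ) (r : V → V) (h : V → ℤ) : Prop where
  height_eq : ∀ u v, r u = r v → r u ≠ r G.bot → h u = h v
  height_top : h G.top = n
  height_le : ∀ v, h v ≤ n
  bot_ne_top : r G.bot ≠ r G.top

variable {G} {O O' F : Finset E} {r r' : V → V} {h : V → ℤ} {T : Multiset V} {c : V} {i : ℕ}
  {d x : E × Bool} {n : ℤ}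

lemma mem_exits : d ∈ G.exits O r c ↔ d.1 ∈ O ∧ r (G.src d) = c ∧ r (G.dst d) ≠ c := by
  simp [exits]

lemma mem_exitsLE : d ∈ G.exitsLE O r h i c ↔ d ∈ G.exits O r c ∧ G.rank r h d ≤ i :=
  Finset.mem_filter

lemma mem_separated {e : E} : e ∈ G.separated F r ↔ e ∈ F ∧ r (G.tail e) ≠ r (G.head e) :=
  Finset.mem_filter

lemma fst_mem_separated : d.1 ∈ G.separated F r ↔ d.1 ∈ F ∧ r (G.src d) ≠ r (G.dst d) := by
  rw [mem_separated, Ne, Ne, label_src_eq_dst_iff]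

lemma fst_mem_separated_of_mem_exits (hd : d ∈ G.exits O r c) : d.1 ∈ G.separated O r := by
  obtain ⟨hO, rfl, hne⟩ := mem_exits.1 hd
  exact fst_mem_separated.2 ⟨hO, hne.symm⟩

lemma rank_of_ne_bot (hd : r (G.src d) ≠ r G.bot) :
    G.rank r h d = stepRank (G.dir d) (h (G.dst d) - h (G.src d)) := if_neg hd

lemma rank_of_eq_bot (hd : r (G.src d) = r G.bot) :
    G.rank r h d = if G.Harmless h d then 1 else 0 := if_pos hd

lemma exitsLE_subset_of_subset (hO : O' ⊆ O) : G.exitsLE O' r h i c ⊆ G.exitsLE O r h i c := by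
  intro d
  simp only [mem_exitsLE, mem_exits]
  exact fun ⟨⟨hd, hexit⟩, hi⟩ => ⟨⟨hO hd, hexit⟩, hi⟩

lemma Bounded.anti (hB : G.Bounded O r h T) (hO : O' ⊆ O) : G.Bounded O' r h T :=
  fun c i hci => (Finset.card_le_card (exitsLE_subset_of_subset hO)).trans (hB c i hci)

lemma Bounded.card_exitsLE_le (hB : G.Bounded O r h T) (hbot : c ≠ r G.bot) (htop : c ≠ r G.top)
    (hi : i ≤ 4) : (G.exitsLE O r h i c).card ≤ i + T.count c :=
  hB c i ⟨hi, fun hc => (hc.elim hbot htop).elim⟩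

lemma Bounded.stepRank_pos (hB : G.Bounded O r h T) (hT : r (G.src d) ∉ T) (hd : d.1 ∈ O)
    (hbot : r (G.src d) ≠ r G.bot) (hne : r (G.src d) ≠ r (G.dst d)) :
    0 < stepRank (G.dir d) (h (G.dst d) - h (G.src d)) := by
  have hcard := hB (r (G.src d)) 0 ⟨by norm_num, fun _ => rfl⟩
  rw [Multiset.count_eq_zero_of_notMem hT, add_zero, Nat.le_zero, Finset.card_eq_zero] at hcard
  rw [← rank_of_ne_bot hbot]
  by_contra! hrank
  have hmem : d ∈ G.exitsLE O r h 0 (r (G.src d)) :=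
    mem_exitsLE.2 ⟨mem_exits.2 ⟨hd, rfl, hne.symm⟩, hrank⟩
  simp [hcard] at hmem

section Deletion

variable [DecidableEq E]

/-- Deleting an exit of minimal rank lowers all the counts of its component simultaneously. -/
lemma card_exitsLE_sdiff_singleton_le (hd : d ∈ G.exits O r c)
    (hmin : ∀ x ∈ G.exits O r c, G.rank r h d ≤ G.rank r h x) :
    (G.exitsLE (O \ {d.1}) r h i c).card ≤ (G.exitsLE O r h i c).card - 1 := by
  have hsub : G.exitsLE (O \ {d.1}) r h i c ⊆ (G.exitsLE O r h i c).erase d := by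
    intro x hx
    refine Finset.mem_erase.2 ⟨?_, exitsLE_subset_of_subset Finset.sdiff_subset hx⟩
    rintro rfl
    simp [mem_exitsLE, mem_exits] at hx
  obtain hE | ⟨x, hx⟩ := (G.exitsLE O r h i c).eq_empty_or_nonempty
  · simpa [hE] using hsub
  · obtain ⟨hx, hi⟩ := mem_exitsLE.1 hx
    rw [← Finset.card_erase_of_mem (mem_exitsLE.2 ⟨hd, (hmin x hx).trans hi⟩)]
    exact Finset.card_le_card hsub

lemma Bounded.exists_delete_one (hB : G.Bounded O r h (c ::ₘ T)) :
    ∃ D ⊆ G.separated O r, D.card ≤ 1 ∧ G.Bounded (O \ D) r h T := by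
  have hother : ∀ D, ∀ c' ≠ c, ∀ i, G.Controlled r c' i →
      (G.exitsLE (O \ D) r h i c').card ≤ i + T.count c' := fun D c' hc' i hi => by
    rw [← Multiset.count_cons_of_ne hc' T]
    exact hB.anti Finset.sdiff_subset c' i hi
  obtain hE | hE := (G.exits O r c).eq_empty_or_nonempty
  · refine ⟨∅, by simp, by simp, fun c' i hi => ?_⟩
    rcases eq_or_ne c' c with rfl | hc'
    · simp [exitsLE, hE]
    · exact hother ∅ c' hc' i hi
  · obtain ⟨d, hd, hmin⟩ := Finset.exists_min_image _ (G.rank r h) hE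
    refine ⟨{d.1}, by simpa using fst_mem_separated_of_mem_exits hd, by simp, fun c' i hi => ?_⟩
    rcases eq_or_ne c' c with rfl | hc'
    · have hle := hB c' i hi
      have hdel := card_exitsLE_sdiff_singleton_le (i := i) hd hmin
      rw [Multiset.count_cons_self] at hle
      omega
    · exact hother {d.1} c' hc' i hi

lemma Bounded.exists_delete (hB : G.Bounded O r h T) :
    ∃ D ⊆ G.separated O r, D.card ≤ T.card ∧ G.Bounded (O \ D) r h 0 := by
  induction T using Multiset.induction generalizing O with
  | empty => exact ⟨∅, by simp, by simp, by simpa using hB⟩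
  | cons c T ih =>
    obtain ⟨D, hD, hcard, hBD⟩ := hB.exists_delete_one
    obtain ⟨D', hD', hcard', hBD'⟩ := ih hBD
    refine ⟨D ∪ D', Finset.union_subset hD (hD'.trans ?_), ?_, ?_⟩
    · exact Finset.filter_subset_filter _ Finset.sdiff_subset
    · have := Finset.card_union_le D D'
      rw [Multiset.card_cons]
      omega
    · rwa [← Finset.sup_eq_union, ← sdiff_sdiff_left]

end Deletion

section Contract

/-- The labelling obtained from `r` by merging the component of the source of `d` into that of its
target. -/
def contract (G : DualGraph E V) (r : V → V) (d : E × Bool) : V → V :=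
  identify (r (G.src d)) (r (G.dst d)) ∘ r

variable {v : V}

lemma contract_of_ne (hv : r v ≠ r (G.src d)) : G.contract r d v = r v := identify_of_ne hv

lemma contract_src_eq_contract_dst : G.contract r d (G.src d) = G.contract r d (G.dst d) := by
  unfold contract
  rw [Function.comp_apply, Function.comp_apply, identify_left, identify_eq_right_iff.2 (Or.inr rfl)]

lemma contract_eq_label_dst_iff :
    G.contract r d v = r (G.dst d) ↔ r v = r (G.src d) ∨ r v = r (G.dst d) :=
  identify_eq_right_iff

lemma contract_ne_label_src (hd : r (G.src d) ≠ r (G.dst d)) (v : V) :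
    G.contract r d v ≠ r (G.src d) :=
  identify_ne_left hd _

lemma contract_eq_iff_of_ne (hsrc : c ≠ r (G.src d)) (hdst : c ≠ r (G.dst d)) :
    G.contract r d v = c ↔ r v = c :=
  identify_eq_iff_of_ne hsrc hdst

lemma factorsThrough_contract : (G.contract r d).FactorsThrough r :=
  Function.FactorsThrough.rfl.comp_left _

lemma separated_subset_of_factorsThrough (hr : r'.FactorsThrough r) :
    G.separated F r' ⊆ G.separated F r := by
  intro e
  simp only [mem_separated]
  exact fun ⟨heF, hne⟩ => ⟨heF, fun h => hne (hr h)⟩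

lemma card_separated_contract_lt (hd : d.1 ∈ G.separated F r) :
    (G.separated F (G.contract r d)).card < (G.separated F r).card := by
  refine Finset.card_lt_card (Finset.ssubset_iff_of_subset
    (separated_subset_of_factorsThrough factorsThrough_contract) |>.2 ⟨d.1, hd, fun hmem => ?_⟩)
  exact (fst_mem_separated.1 hmem).2 contract_src_eq_contract_dst

lemma mem_exits_contract_label_dst [DecidableEq E]
    (hx : x ∈ G.exits O (G.contract r d) (r (G.dst d))) :
    r (G.dst x) ≠ r (G.src d) ∧ r (G.dst x) ≠ r (G.dst d) ∧
      (x ∈ (G.exits O r (r (G.src d))).erase d ∨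
        x ∈ (G.exits O r (r (G.dst d))).erase (rev d)) := by
  simp only [mem_exits, Ne, contract_eq_label_dst_iff, not_or] at hx
  obtain ⟨hO, hsrc, hdst, hdst'⟩ := hx
  refine ⟨hdst, hdst', hsrc.imp (fun h => ?_) fun h => ?_⟩
  · exact Finset.mem_erase.2 ⟨fun hxd => hdst' (by rw [hxd]), mem_exits.2 ⟨hO, h, hdst⟩⟩
  · exact Finset.mem_erase.2
      ⟨fun hxd => hdst (by rw [hxd, dst_rev]), mem_exits.2 ⟨hO, h, hdst'⟩⟩

variable {h' : V → ℤ} {j : ℕ} {T' : Multiset V}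

lemma exitsLE_contract_label_dst_subset [DecidableEq E]
    (hsrc : ∀ x, r (G.src x) = r (G.src d) → r (G.dst x) ≠ r (G.src d) →
      r (G.dst x) ≠ r (G.dst d) → G.rank (G.contract r d) h' x ≤ i → G.rank r h x ≤ j)
    (hdst : ∀ x, r (G.src x) = r (G.dst d) → r (G.dst x) ≠ r (G.src d) →
      r (G.dst x) ≠ r (G.dst d) → G.rank (G.contract r d) h' x ≤ i → G.rank r h x ≤ i) :
    G.exitsLE O (G.contract r d) h' i (r (G.dst d)) ⊆
      (G.exitsLE O r h j (r (G.src d))).erase d ∪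
        (G.exitsLE O r h i (r (G.dst d))).erase (rev d) := by
  intro x hx
  obtain ⟨hx, hi⟩ := mem_exitsLE.1 hx
  obtain ⟨hne, hne', hx | hx⟩ := mem_exits_contract_label_dst hx <;>
    obtain ⟨hxd, hx⟩ := Finset.mem_erase.1 hx
  · exact Finset.mem_union_left _ (Finset.mem_erase.2
      ⟨hxd, mem_exitsLE.2 ⟨hx, hsrc x (mem_exits.1 hx).2.1 hne hne' hi⟩⟩)
  · exact Finset.mem_union_right _ (Finset.mem_erase.2
      ⟨hxd, mem_exitsLE.2 ⟨hx, hdst x (mem_exits.1 hx).2.1 hne hne' hi⟩⟩)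

/-- Only the count of the merged component needs an argument. -/
lemma Bounded.contract (hB : G.Bounded O r h T) (hd : r (G.src d) ≠ r (G.dst d))
    (hrank : ∀ x, r (G.src x) ≠ r (G.src d) → r (G.src x) ≠ r (G.dst d) →
      G.rank r h x ≤ G.rank (G.contract r d) h' x)
    (hcount : ∀ c, c ≠ r (G.src d) → c ≠ r (G.dst d) → T.count c ≤ T'.count c)
    (hmerged : ∀ i, G.Controlled (G.contract r d) (r (G.dst d)) i →
      (G.exitsLE O (G.contract r d) h' i (r (G.dst d))).card ≤ i + T'.count (r (G.dst d))) :
    G.Bounded O (G.contract r d) h' T' := by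
  intro c i hci
  rcases eq_or_ne c (r (G.dst d)) with rfl | hdst
  · exact hmerged i hci
  rcases eq_or_ne c (r (G.src d)) with rfl | hsrc
  · have hempty : G.exitsLE O (G.contract r d) h' i (r (G.src d)) = ∅ :=
      Finset.eq_empty_of_forall_notMem fun x hx =>
        contract_ne_label_src hd _ (mem_exits.1 (mem_exitsLE.1 hx).1).2.1
    simp [hempty]
  have hci' : G.Controlled r c i := by
    refine ⟨hci.1, fun hc => hci.2 (hc.imp (fun hc => ?_) fun hc => ?_)⟩
    · rw [contract_of_ne (hc ▸ hsrc), hc]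
    · rw [contract_of_ne (hc ▸ hsrc), hc]
  have hsub : G.exitsLE O (G.contract r d) h' i c ⊆ G.exitsLE O r h i c := by
    intro x
    simp only [mem_exitsLE, mem_exits, Ne, contract_eq_iff_of_ne hsrc hdst]
    rintro ⟨⟨hO, rfl, hexit⟩, hi⟩
    exact ⟨⟨hO, rfl, hexit⟩, (hrank x hsrc hdst).trans hi⟩
  have hle := hB c i hci'
  have := Finset.card_le_card hsub
  have := hcount c hsrc hdst
  omega

end Contract

section Grounding

/-- The state of affairs after `k` components have been merged into the component of `bot`: only
that component awaits replies, `2 * k` of them, and its harmful exits start at height at most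
`k`. -/
structure Grounded (G : DualGraph E V) (n : ℤ) (O : Finset E) (r : V → V) (h : V → ℤ) (k : ℕ) :
    Prop where
  terrain : G.IsTerrain n r h
  bounded : G.Bounded O r h (Multiset.replicate (2 * k) (r G.bot))
  low : ∀ d ∈ G.exitsLE O r h 0 (r G.bot), h (G.src d) ≤ k

variable {k : ℕ}

lemma Grounded.of_bounded (hT : G.IsTerrain n r h) (hB : G.Bounded O r h 0) :
    G.Grounded n O r h 0 := by
  refine ⟨hT, hB, fun d hd => ?_⟩
  have hcard := hB (r G.bot) 0 ⟨by norm_num, fun _ => rfl⟩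
  rw [Multiset.count_zero, add_zero, Nat.le_zero, Finset.card_eq_zero] at hcard
  simp [hcard] at hd

lemma Grounded.stepRank_pos (hG : G.Grounded n O r h k) (hd : d.1 ∈ O)
    (hsrc : r (G.src d) ≠ r G.bot) (hne : r (G.src d) ≠ r (G.dst d)) :
    0 < stepRank (G.dir d) (h (G.dst d) - h (G.src d)) :=
  hG.bounded.stepRank_pos (fun hmem => hsrc (Multiset.eq_of_mem_replicate hmem)) hd hsrc hne

lemma rev_mem_exitsLE_bot (hd : d.1 ∈ O) (hsrc : r (G.src d) ≠ r G.bot)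
    (hdst : r (G.dst d) = r G.bot) (hharm : ¬ G.Harmless h (rev d)) :
    rev d ∈ G.exitsLE O r h 0 (r G.bot) := by
  rw [mem_exitsLE, mem_exits, src_rev, dst_rev, rank_of_eq_bot (by rwa [src_rev]), if_neg hharm]
  exact ⟨⟨hd, hdst, hsrc⟩, le_rfl⟩

lemma Grounded.height_src_le (hG : G.Grounded n O r h k) (hd : d.1 ∈ O)
    (hsrc : r (G.src d) ≠ r G.bot) (hdst : r (G.dst d) = r G.bot) : h (G.src d) ≤ k + 1 := by
  have hpos := hG.stepRank_pos hd hsrc (by rwa [hdst])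
  by_cases hharm : G.Harmless h (rev d)
  · have := height_dst_le_one_of_harmless hharm (by simpa using hpos)
    rw [dst_rev] at this
    omega
  · have hlow := hG.low _ (rev_mem_exitsLE_bot hd hsrc hdst hharm)
    have := neg_one_le_of_stepRank_pos hpos
    rw [src_rev] at hlow
    omega

lemma Grounded.src_ne_top (hG : G.Grounded n O r h k) (hk : (k : ℤ) + 1 < n) (hd : d.1 ∈ O)
    (hsrc : r (G.src d) ≠ r G.bot) (hdst : r (G.dst d) = r G.bot) : r (G.src d) ≠ r G.top := by
  intro htop
  have hle := hG.height_src_le hd hsrc hdst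
  rw [hG.terrain.height_eq _ _ htop hsrc, hG.terrain.height_top] at hle
  omega

lemma not_harmless_of_rank_le_zero (hx : r (G.src x) = r G.bot) (h0 : G.rank r h x ≤ 0) :
    ¬ G.Harmless h x := by
  intro hharm
  simp [rank_of_eq_bot hx, hharm] at h0

lemma contract_bot (hsrc : r (G.src d) ≠ r G.bot) : G.contract r d G.bot = r G.bot :=
  contract_of_ne hsrc.symm

/-- Of the grounded component at most `j - 1` exits become harmful exits of `bot` if all its
exits of rank more than `j` become harmless. -/
lemma Grounded.card_exitsLE_contract_le [DecidableEq E] (hG : G.Grounded n O r h k)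
    (hk : (k : ℤ) + 1 < n) (hd : d.1 ∈ O) (hsrc : r (G.src d) ≠ r G.bot)
    (hdst : r (G.dst d) = r G.bot) (hi : i ≤ 4)
    (hrank : ∀ x, r (G.src x) = r (G.src d) → ¬ G.Harmless h x →
      stepRank (G.dir x) (h (G.dst x) - h (G.src x)) ≤ i)
    (hdi : stepRank (G.dir d) (h (G.dst d) - h (G.src d)) ≤ i) :
    (G.exitsLE O (G.contract r d) h 0 (r (G.dst d))).card ≤
      (i - 1) + ((G.exitsLE O r h 0 (r G.bot)).erase (rev d)).card := by
  have hharm : ∀ x, r (G.src x) = r (G.src d) ∨ r (G.src x) = r (G.dst d) →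
      G.rank (G.contract r d) h x ≤ 0 → ¬ G.Harmless h x := fun x hx =>
    not_harmless_of_rank_le_zero (by rw [contract_bot hsrc, ← hdst, contract_eq_label_dst_iff.2 hx])
  have hsub := exitsLE_contract_label_dst_subset (O := O) (r := r) (d := d) (h := h) (j := i)
    (fun x hx _ _ h0 => by
      rw [rank_of_ne_bot (hx ▸ hsrc)]
      exact hrank x hx (hharm x (Or.inl hx) h0))
    (fun x hx _ _ h0 => by
      rw [rank_of_eq_bot (hx.trans hdst), if_neg (hharm x (Or.inr hx) h0)])
  have hmem : d ∈ G.exitsLE O r h i (r (G.src d)) :=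
    mem_exitsLE.2 ⟨mem_exits.2 ⟨hd, rfl, hdst ▸ hsrc.symm⟩, by rwa [rank_of_ne_bot hsrc]⟩
  have hcard : (G.exitsLE O r h i (r (G.src d))).card ≤ i := by
    simpa [Multiset.count_replicate, hsrc.symm] using
      hG.bounded.card_exitsLE_le hsrc (hG.src_ne_top hk hd hsrc hdst) hi
  calc (G.exitsLE O (G.contract r d) h 0 (r (G.dst d))).card
      ≤ ((G.exitsLE O r h i (r (G.src d))).erase d).card +
          ((G.exitsLE O r h 0 (r (G.dst d))).erase (rev d)).card :=
        (Finset.card_le_card hsub).trans (Finset.card_union_le _ _)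
    _ ≤ (i - 1) + ((G.exitsLE O r h 0 (r G.bot)).erase (rev d)).card := by
        rw [Finset.card_erase_of_mem hmem, hdst]
        omega

/-- If `rev d` is harmful, merging removes it and adds at most three exits. Otherwise the grounded
component has height at most `1`, so that its exits of direction `1` become harmless and at most
two harmful ones are added. -/
lemma Grounded.card_exitsLE_bot_le (hG : G.Grounded n O r h k) (hk : (k : ℤ) + 1 < n)
    (hd : d.1 ∈ O) (hsrc : r (G.src d) ≠ r G.bot) (hdst : r (G.dst d) = r G.bot) :
    (G.exitsLE O (G.contract r d) h 0 (r (G.dst d))).card ≤ 2 * (k + 1) := by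
  classical
  have hcard : (G.exitsLE O r h 0 (r G.bot)).card ≤ 2 * k := by
    simpa using hG.bounded (r G.bot) 0 ⟨by norm_num, fun _ => rfl⟩
  by_cases hharm : G.Harmless h (rev d)
  · have hheight := height_dst_le_one_of_harmless hharm
      (by simpa using hG.stepRank_pos hd hsrc (by rwa [hdst]))
    have hdir : G.dir d ≠ 1 := fun hdir => hharm.dir_ne_neg_one (by rw [dir_rev, hdir])
    have := hG.card_exitsLE_contract_le hk hd hsrc hdst (i := 3) (by norm_num)
      (fun x hx hx' => stepRank_le_three (fun hdirx => hx' (Or.inr ⟨hdirx, by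
        rwa [hG.terrain.height_eq _ _ hx (hx ▸ hsrc), ← dst_rev]⟩)) _)
      (stepRank_le_three hdir _)
    have := Finset.card_erase_le (s := G.exitsLE O r h 0 (r G.bot)) (a := rev d)
    omega
  · have hrev := rev_mem_exitsLE_bot hd hsrc hdst hharm
    have hle := hG.card_exitsLE_contract_le hk hd hsrc hdst le_rfl
      (fun _ _ _ => stepRank_le_four _ _) (stepRank_le_four _ _)
    have := Finset.card_pos.2 ⟨_, hrev⟩
    rw [Finset.card_erase_of_mem hrev] at hle
    omega

lemma Grounded.contract (hG : G.Grounded n O r h k) (hk : (k : ℤ) + 1 < n) (hd : d.1 ∈ O)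
    (hsrc : r (G.src d) ≠ r G.bot) (hdst : r (G.dst d) = r G.bot) :
    G.Grounded n O (G.contract r d) h (k + 1) := by
  have hne : r (G.src d) ≠ r (G.dst d) := by rwa [hdst]
  have hlabel : ∀ v, G.contract r d v ≠ r G.bot → r v ≠ r (G.src d) := fun v hv hsrc' =>
    hv (by rw [← hdst, contract_eq_label_dst_iff.2 (Or.inl hsrc')])
  refine ⟨⟨fun u v huv hu => ?_, hG.terrain.height_top, hG.terrain.height_le, ?_⟩, ?_,
    fun x hx => ?_⟩
  · rw [contract_bot hsrc] at hu
    have hru := contract_of_ne (hlabel u hu)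
    have hrv := contract_of_ne (hlabel v (huv ▸ hu))
    exact hG.terrain.height_eq u v (by rw [← hru, huv, hrv]) (hru ▸ hu)
  · rw [contract_bot hsrc, contract_of_ne (hG.src_ne_top hk hd hsrc hdst).symm]
    exact hG.terrain.bot_ne_top
  · refine hG.bounded.contract hne (fun x hx hx' => ?_) (fun c _ hc => ?_) fun i hi => ?_
    · rw [rank_of_ne_bot (hdst ▸ hx'), rank_of_ne_bot]
      rwa [contract_bot hsrc, contract_of_ne hx, ← hdst]
    · simp [Multiset.count_replicate, (hdst ▸ hc).symm]
    · obtain rfl := hi.2 (Or.inl (by rw [contract_bot hsrc, hdst]))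
      rw [contract_bot hsrc, hdst, Multiset.count_replicate_self, zero_add, ← hdst]
      exact hG.card_exitsLE_bot_le hk hd hsrc hdst
  · obtain ⟨hx, h0⟩ := mem_exitsLE.1 hx
    obtain ⟨hO, hlab, hexit⟩ := mem_exits.1 hx
    have hharm := not_harmless_of_rank_le_zero hlab h0
    rw [contract_bot hsrc, ← hdst, contract_eq_label_dst_iff] at hlab
    rw [contract_bot hsrc, Ne, ← hdst, contract_eq_label_dst_iff, not_or] at hexit
    rcases hlab with hlab | hlab
    · rw [hG.terrain.height_eq _ _ hlab (hlab ▸ hsrc), Nat.cast_succ]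
      exact hG.height_src_le hd hsrc hdst
    · have hmem : x ∈ G.exitsLE O r h 0 (r G.bot) := mem_exitsLE.2
        ⟨mem_exits.2 ⟨hO, hlab.trans hdst, hdst ▸ hexit.2⟩, by
          rw [rank_of_eq_bot (hlab.trans hdst), if_neg hharm]⟩
      exact (hG.low x hmem).trans (by simp)

lemma Grounded.exists_no_separated_bot (hG : G.Grounded n O r h k) (hF : F ⊆ O)
    (hk : k + (G.separated F r).card ≤ F.card) (hn : (F.card : ℤ) < n) :
    ∃ r' k', r'.FactorsThrough r ∧ k' + (G.separated F r').card ≤ F.card ∧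
      G.Grounded n O r' h k' ∧ ∀ d, d.1 ∈ G.separated F r' → r' (G.src d) ≠ r' G.bot := by
  induction hs : (G.separated F r).card using Nat.strong_induction_on generalizing r k with
  | _ s ih =>
    by_cases hbot : ∀ d, d.1 ∈ G.separated F r → r (G.src d) ≠ r G.bot
    · exact ⟨r, k, .rfl, hk, hG, hbot⟩
    · push Not at hbot
      obtain ⟨d, hd, hsrc⟩ := hbot
      have hne := (fst_mem_separated.1 hd).2
      have hlt := card_separated_contract_lt (d := rev d) hd
      have hpos := Finset.card_pos.2 ⟨_, hd⟩
      have hG' := hG.contract (d := rev d) (by omega) (hF (mem_separated.1 hd).1)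
        (by rw [src_rev, ← hsrc]; exact hne.symm) (by rwa [dst_rev])
      obtain ⟨r', k', hr', h'⟩ := ih _ (hs ▸ hlt) hG' (by omega) rfl
      exact ⟨r', k', fun u v huv => hr' (factorsThrough_contract huv), h'⟩

end Grounding

section Raising

/-- A dart between two components other than that of `bot` along which the height stays constant or
increases by one; its source component is not that of `top`. -/
structure Climb (G : DualGraph E V) (r : V → V) (h : V → ℤ) (d : E × Bool) : Prop where
  ne : r (G.src d) ≠ r (G.dst d)
  src_ne_bot : r (G.src d) ≠ r G.bot
  dst_ne_bot : r (G.dst d) ≠ r G.bot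
  src_ne_top : r (G.src d) ≠ r G.top
  height : h (G.dst d) = h (G.src d) ∨ h (G.dst d) = h (G.src d) + 1

/-- The height function obtained from `h` by lifting the component of the source of `d` to the
height of the target of `d`. -/
def raise (G : DualGraph E V) (r : V → V) (h : V → ℤ) (d : E × Bool) (v : V) : ℤ :=
  if r v = r (G.src d) then h (G.dst d) else h v

variable {v : V}

lemma raise_of_eq (hv : r v = r (G.src d)) : G.raise r h d v = h (G.dst d) := if_pos hv

lemma raise_of_ne (hv : r v ≠ r (G.src d)) : G.raise r h d v = h v := if_neg hv

lemma Climb.le_raise (hd : G.Climb r h d) (hT : G.IsTerrain n r h) (v : V) :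
    h v ≤ G.raise r h d v := by
  by_cases hv : r v = r (G.src d)
  · rw [raise_of_eq hv, hT.height_eq _ _ hv (hv ▸ hd.src_ne_bot)]
    have := hd.height
    omega
  · exact (raise_of_ne hv).ge

lemma Climb.isTerrain (hd : G.Climb r h d) (hT : G.IsTerrain n r h) :
    G.IsTerrain n (G.contract r d) (G.raise r h d) := by
  have hmerged : ∀ v, G.contract r d v = r (G.dst d) → G.raise r h d v = h (G.dst d) := by
    intro v hv
    by_cases hv' : r v = r (G.src d)
    · exact raise_of_eq hv'
    · rw [contract_of_ne hv'] at hv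
      rw [raise_of_ne hv', hT.height_eq _ _ hv (hv ▸ hd.dst_ne_bot)]
  refine ⟨fun u v huv hu => ?_, ?_, fun v => ?_, ?_⟩
  · by_cases hdst : G.contract r d u = r (G.dst d)
    · rw [hmerged u hdst, hmerged v (huv ▸ hdst)]
    · have hlabel : ∀ w, G.contract r d w ≠ r (G.dst d) → r w ≠ r (G.src d) := fun w hw hw' =>
        hw (contract_eq_label_dst_iff.2 (Or.inl hw'))
      have hu' := hlabel u hdst
      have hv' := hlabel v (huv ▸ hdst)
      rw [contract_of_ne hu', contract_bot hd.src_ne_bot] at hu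
      rw [contract_of_ne hu', contract_of_ne hv'] at huv
      rw [raise_of_ne hu', raise_of_ne hv', hT.height_eq u v huv hu]
  · rw [raise_of_ne hd.src_ne_top.symm, hT.height_top]
  · unfold raise
    split_ifs
    exacts [hT.height_le _, hT.height_le _]
  · rw [contract_bot hd.src_ne_bot, contract_of_ne hd.src_ne_top.symm]
    exact hT.bot_ne_top

lemma Climb.rank_le_rank (hd : G.Climb r h d) (hT : G.IsTerrain n r h)
    (hx : r (G.src x) ≠ r (G.src d)) :
    G.rank r h x ≤ G.rank (G.contract r d) (G.raise r h d) x := by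
  by_cases hbot : r (G.src x) = r G.bot
  · have hbot' : G.contract r d (G.src x) = G.contract r d G.bot := by
      rw [contract_bot hd.src_ne_bot, contract_of_ne hx, hbot]
    rw [rank_of_eq_bot hbot, rank_of_eq_bot hbot']
    exact (if_congr (by simp only [Harmless, raise_of_ne hx]) rfl rfl).le
  · rw [rank_of_ne_bot hbot, rank_of_ne_bot, raise_of_ne hx]
    · have := hd.le_raise hT (G.dst x)
      exact stepRank_mono _ (by omega)
    · intro hbot'
      rw [contract_bot hd.src_ne_bot, contract_of_ne hx] at hbot'
      exact hbot hbot'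

lemma Climb.rank_eq_of_src (hd : G.Climb r h d) (hx : r (G.src x) = r (G.src d))
    (hx' : r (G.dst x) ≠ r (G.src d)) :
    G.rank (G.contract r d) (G.raise r h d) x =
      stepRank (G.dir x) (h (G.dst x) - h (G.dst d)) := by
  rw [rank_of_ne_bot, raise_of_eq hx, raise_of_ne hx']
  rw [contract_bot hd.src_ne_bot, contract_eq_label_dst_iff.2 (Or.inl hx)]
  exact hd.dst_ne_bot

/-- The exits of the merged component come from the two old ones, with ranks at most `j` in the
raised component. -/
lemma Climb.card_exitsLE_le [DecidableEq E] {j : ℕ} (hd : G.Climb r h d)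
    (hT : G.IsTerrain n r h) (hj : ∀ s δ, stepRank s (δ + h (G.src d) - h (G.dst d)) ≤ i →
      stepRank s δ ≤ j) :
    (G.exitsLE O (G.contract r d) (G.raise r h d) i (r (G.dst d))).card ≤
      ((G.exitsLE O r h j (r (G.src d))).erase d).card +
        ((G.exitsLE O r h i (r (G.dst d))).erase (rev d)).card := by
  refine (Finset.card_le_card (exitsLE_contract_label_dst_subset (fun x hx hx' _ hi => ?_)
    fun x hx _ _ hi => ?_)).trans (Finset.card_union_le _ _)
  · rw [hd.rank_eq_of_src hx hx'] at hi
    rw [rank_of_ne_bot (hx ▸ hd.src_ne_bot), hT.height_eq _ _ hx (hx ▸ hd.src_ne_bot)]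
    exact hj _ _ (by rwa [sub_add_cancel])
  · exact (hd.rank_le_rank hT (hx ▸ hd.ne.symm)).trans hi

lemma Climb.mem_exitsLE_src (hd : G.Climb r h d) (hO : d.1 ∈ O)
    (hi : stepRank (G.dir d) (h (G.dst d) - h (G.src d)) ≤ i) :
    d ∈ G.exitsLE O r h i (r (G.src d)) :=
  mem_exitsLE.2 ⟨mem_exits.2 ⟨hO, rfl, hd.ne.symm⟩, by rwa [rank_of_ne_bot hd.src_ne_bot]⟩

lemma Climb.rev_mem_exitsLE_dst (hd : G.Climb r h d) (hO : d.1 ∈ O)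
    (hi : stepRank (-G.dir d) (h (G.src d) - h (G.dst d)) ≤ i) :
    rev d ∈ G.exitsLE O r h i (r (G.dst d)) := by
  rw [mem_exitsLE, mem_exits, rank_of_ne_bot (by rw [src_rev]; exact hd.dst_ne_bot), src_rev,
    dst_rev, dir_rev]
  exact ⟨⟨hO, rfl, hd.ne⟩, hi⟩

/-- Merging along a level dart: a bound of `2 * i` on the new exits is improved by one if `i = 3`
and by two if `i = 4`, since `d` and `rev d` disappear. -/
lemma Climb.card_exitsLE_le_of_level (hd : G.Climb r h d) (hT : G.IsTerrain n r h)
    (hB : G.Bounded O r h T) (hO : d.1 ∈ O) (hlevel : h (G.dst d) = h (G.src d))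
    (hi : G.Controlled r (r (G.dst d)) i) :
    (G.exitsLE O (G.contract r d) (G.raise r h d) i (r (G.dst d))).card ≤
      i + (2 + T.count (r (G.src d)) + T.count (r (G.dst d))) := by
  classical
  have hle := hd.card_exitsLE_le (O := O) (i := i) (j := i) hT (by simp [hlevel])
  have hsrc := hB.card_exitsLE_le hd.src_ne_bot hd.src_ne_top hi.1
  have hdst := hB _ i hi
  have hmem := hd.mem_exitsLE_src hO (i := i)
  have hmem' := hd.rev_mem_exitsLE_dst hO (i := i)
  rw [hlevel, sub_self] at hmem hmem'
  have hcard := fun hs => Finset.card_erase_add_one (hmem hs)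
  have hcard' := fun hs => Finset.card_erase_add_one (hmem' hs)
  have := Finset.card_erase_le (s := G.exitsLE O r h i (r (G.src d))) (a := d)
  have := Finset.card_erase_le (s := G.exitsLE O r h i (r (G.dst d))) (a := rev d)
  obtain hi2 | rfl | rfl : i ≤ 2 ∨ i = 3 ∨ i = 4 := by have := hi.1; omega
  · omega
  · rcases stepRank_zero_le_two_or (G.dir d) with hs | hs
    · have := hcard (by omega)
      omega
    · have := hcard' (by omega)
      omega
  · have := hcard (stepRank_le_four _ _)
    have := hcard' (stepRank_le_four _ _)
    omega

/-- Raising by one turns ranks `0` into ranks at most `2`; for `i ≥ 1` we count all exits of the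
raised component and use that `d` and `rev d`, the latter of rank at most `1`, disappear. -/
lemma Climb.card_exitsLE_le_of_steep (hd : G.Climb r h d) (hT : G.IsTerrain n r h)
    (hB : G.Bounded O r h T) (hO : d.1 ∈ O) (hsteep : h (G.dst d) = h (G.src d) + 1)
    (hi : G.Controlled r (r (G.dst d)) i) :
    (G.exitsLE O (G.contract r d) (G.raise r h d) i (r (G.dst d))).card ≤
      i + (2 + T.count (r (G.src d)) + T.count (r (G.dst d))) := by
  classical
  have hsrc := fun j => hB.card_exitsLE_le (i := j) hd.src_ne_bot hd.src_ne_top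
  have hdst := hB _ i hi
  have := Finset.card_erase_le (s := G.exitsLE O r h i (r (G.dst d))) (a := rev d)
  rcases Nat.eq_zero_or_pos i with rfl | hpos
  · have := hd.card_exitsLE_le (O := O) (i := 0) (j := 2) hT fun s δ hs =>
      stepRank_le_two_of_sub_one (Nat.le_zero.1 (by convert hs using 2; omega))
    have := hsrc 2 (by norm_num)
    have := Finset.card_erase_le (s := G.exitsLE O r h 2 (r (G.src d))) (a := d)
    omega
  · have := hd.card_exitsLE_le (O := O) (i := i) (j := 4) hT fun _ _ _ => stepRank_le_four _ _
    have := hsrc 4 le_rfl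
    have := Finset.card_erase_add_one (hd.mem_exitsLE_src hO (stepRank_le_four _ _))
    have := Finset.card_erase_add_one (hd.rev_mem_exitsLE_dst hO (i := i) (by
      rw [hsteep, sub_add_cancel_left]
      exact (stepRank_neg_one_le_one _).trans hpos))
    omega

lemma Climb.bounded (hd : G.Climb r h d) (hT : G.IsTerrain n r h) (hB : G.Bounded O r h T)
    (hO : d.1 ∈ O) :
    G.Bounded O (G.contract r d) (G.raise r h d)
      (r (G.dst d) ::ₘ r (G.dst d) ::ₘ T.map (identify (r (G.src d)) (r (G.dst d)))) := by
  refine hB.contract hd.ne (fun x hx _ => hd.rank_le_rank hT hx) (fun c hc hc' => ?_)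
    fun i hi => ?_
  · rw [Multiset.count_cons_of_ne hc', Multiset.count_cons_of_ne hc',
      count_map_identify_of_ne hc hc']
  · have hi' : G.Controlled r (r (G.dst d)) i := by
      rwa [Controlled, contract_bot hd.src_ne_bot, contract_of_ne hd.src_ne_top.symm] at hi
    rw [Multiset.count_cons_self, Multiset.count_cons_self, count_map_identify_right hd.ne]
    refine (hd.height.elim (fun hlevel => hd.card_exitsLE_le_of_level hT hB hO hlevel hi')
      fun hsteep => hd.card_exitsLE_le_of_steep hT hB hO hsteep hi').trans (by omega)

/-- The configuration while components are merged away from `bot`: no edge of `F` still to be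
contracted touches the component of `bot`, and none of them is steep. -/
structure Raisable (G : DualGraph E V) (n : ℤ) (O F : Finset E) (r : V → V) (h : V → ℤ)
    (T : Multiset V) : Prop where
  terrain : G.IsTerrain n r h
  bounded : G.Bounded O r h T
  ne_bot : ∀ d, d.1 ∈ G.separated F r → r (G.src d) ≠ r G.bot
  height_le : ∀ d, d.1 ∈ G.separated F r → h (G.dst d) ≤ h (G.src d) + 1
  card_le : T.card + 2 * (G.separated F r).card ≤ 2 * F.card

lemma Raisable.exists_lowest_climb (hR : G.Raisable n O F r h T)
    (hF : (G.separated F r).Nonempty) :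
    ∃ d, d.1 ∈ G.separated F r ∧ G.Climb r h d ∧
      ∀ x, x.1 ∈ G.separated F r → h (G.src d) ≤ h (G.src x) := by
  obtain ⟨e, he⟩ := hF
  obtain ⟨d, hd, hmin⟩ := Finset.exists_min_image (G.separated F r ×ˢ Finset.univ)
    (fun d : E × Bool => h (G.src d)) ⟨(e, true), by simpa using he⟩
  simp only [Finset.mem_product, Finset.mem_univ, and_true] at hd hmin
  have hne := (fst_mem_separated.1 hd).2
  have hsrc := hR.ne_bot d hd
  have hdst : r (G.dst d) ≠ r G.bot := by simpa using hR.ne_bot (rev d) hd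
  have hle := hR.height_le d hd
  have hge : h (G.src d) ≤ h (G.dst d) := by simpa using hmin (rev d) hd
  by_cases htop : r (G.src d) = r G.top
  · have hn : h (G.src d) = n := by rw [hR.terrain.height_eq _ _ htop hsrc, hR.terrain.height_top]
    have hlevel := hR.terrain.height_le (G.dst d)
    refine ⟨rev d, hd, ⟨?_, ?_, ?_, ?_, ?_⟩, ?_⟩ <;> simp only [src_rev, dst_rev]
    exacts [hne.symm, hdst, hsrc, htop ▸ hne.symm, Or.inl (by omega),
      fun x hx => by have := hmin x hx; omega]
  · exact ⟨d, hd, ⟨hne, hsrc, hdst, htop, by omega⟩, hmin⟩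

lemma Raisable.contract (hR : G.Raisable n O F r h T) (hF : F ⊆ O) (hd : G.Climb r h d)
    (hdF : d.1 ∈ G.separated F r) (hmin : ∀ x, x.1 ∈ G.separated F r → h (G.src d) ≤ h (G.src x)) :
    G.Raisable n O F (G.contract r d) (G.raise r h d)
      (r (G.dst d) ::ₘ r (G.dst d) ::ₘ T.map (identify (r (G.src d)) (r (G.dst d)))) := by
  have hsub : G.separated F (G.contract r d) ⊆ G.separated F r :=
    separated_subset_of_factorsThrough factorsThrough_contract
  refine ⟨hd.isTerrain hR.terrain, hd.bounded hR.terrain hR.bounded (hF (mem_separated.1 hdF).1),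
    fun x hx => ?_, fun x hx => ?_, ?_⟩
  · rw [contract_bot hd.src_ne_bot]
    by_cases hx' : r (G.src x) = r (G.src d)
    · rw [contract_eq_label_dst_iff.2 (Or.inl hx')]
      exact hd.dst_ne_bot
    · rw [contract_of_ne hx']
      exact hR.ne_bot x (hsub hx)
  · have hraise := hd.le_raise hR.terrain (G.src x)
    by_cases hx' : r (G.dst x) = r (G.src d)
    · rw [raise_of_eq hx']
      have := hmin x (hsub hx)
      have := hd.height
      omega
    · rw [raise_of_ne hx']
      have := hR.height_le x (hsub hx)
      omega
  · have := card_separated_contract_lt hdF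
    have := hR.card_le
    simp only [Multiset.card_cons, Multiset.card_map]
    omega

lemma Raisable.exists_separated_eq_empty (hR : G.Raisable n O F r h T) (hF : F ⊆ O) :
    ∃ r' h' T', r'.FactorsThrough r ∧ G.Raisable n O F r' h' T' ∧ G.separated F r' = ∅ := by
  induction hs : (G.separated F r).card using Nat.strong_induction_on generalizing r h T with
  | _ s ih =>
    obtain hE | hE := (G.separated F r).eq_empty_or_nonempty
    · exact ⟨r, h, T, .rfl, hR, hE⟩
    · obtain ⟨d, hdF, hd, hmin⟩ := hR.exists_lowest_climb hE
      obtain ⟨r', h', T', hr', h''⟩ :=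
        ih _ (hs ▸ card_separated_contract_lt hdF) (hR.contract hF hd hdF hmin) rfl
      exact ⟨r', h', T', fun u v huv => hr' (factorsThrough_contract huv), h''⟩

end Raising

lemma Grounded.raisable {k : ℕ} (hG : G.Grounded n O r h k) (hF : F ⊆ O)
    (hk : k + (G.separated F r).card ≤ F.card)
    (hbot : ∀ d, d.1 ∈ G.separated F r → r (G.src d) ≠ r G.bot) :
    G.Raisable n O F r h (Multiset.replicate (2 * k) (r G.bot)) := by
  refine ⟨hG.terrain, hG.bounded, hbot, fun d hd => ?_, ?_⟩
  · have hdF := fst_mem_separated.1 hd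
    have hpos := hG.stepRank_pos (d := rev d) (hF hdF.1) (hbot (rev d) hd)
      (by simpa using hdF.2.symm)
    have := neg_one_le_of_stepRank_pos hpos
    simp only [src_rev, dst_rev] at this
    omega
  · rw [Multiset.card_replicate]
    omega

/-- Maker's reply `D` to a move `F` of Breaker, whose edges have to be contracted. -/
theorem exists_reply [DecidableEq E] (hT : G.IsTerrain n r h) (hB : G.Bounded O r h 0)
    (hF : F ⊆ O) (hn : (F.card : ℤ) < n) :
    ∃ r' h' D, r'.FactorsThrough r ∧ (∀ e ∈ F, r' (G.tail e) = r' (G.head e)) ∧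
      D ⊆ G.separated O r' ∧ D.card ≤ 2 * F.card ∧
      G.IsTerrain n r' h' ∧ G.Bounded (O \ D) r' h' 0 := by
  obtain ⟨r₁, k, hr₁, hk, hG, hbot⟩ := (Grounded.of_bounded hT hB).exists_no_separated_bot hF
    (by rw [zero_add]; exact Finset.card_filter_le _ _) hn
  obtain ⟨r₂, h₂, T, hr₂, hR, hE⟩ := (hG.raisable hF hk hbot).exists_separated_eq_empty hF
  obtain ⟨D, hD, hcard, hBD⟩ := hR.bounded.exists_delete
  refine ⟨r₂, h₂, D, fun u v huv => hr₂ (hr₁ huv), fun e he => ?_, hD, ?_, hR.terrain, hBD⟩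
  · by_contra hne
    simpa [hE] using mem_separated.2 ⟨he, hne⟩
  · have := hR.card_le
    omega

end DualGraph

section Crossing

variable {m n : ℕ} {M : Set Edge} {g : Vtx → ℤ} {u v : Vtx} {x y : ℤ}

/-- The face on the other side of `e` than the face `e.1`; a face is named by its lower left
corner. -/
def backFace (e : Edge) : Vtx := if e.2 then (e.1.1, e.1.2 - 1) else (e.1.1 - 1, e.1.2)

/-- `u` and `v` are joined by an edge of `M` within the grid. -/
def Linked (m n : ℕ) (M : Set Edge) (u v : Vtx) : Prop :=
  u ∈ lamVtx m n ∧ v ∈ lamVtx m n ∧ ∃ e ∈ M, joins e u v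

lemma Linked.symm (huv : Linked m n M u v) : Linked m n M v u :=
  ⟨huv.2.1, huv.1, huv.2.2.imp fun _ he => ⟨he.1, he.2.symm⟩⟩

lemma exists_path_of_reflTransGen (hv : v ∈ lamVtx m n)
    (huv : Relation.ReflTransGen (Linked m n M) u v) :
    ∃ l : List Vtx, l.head? = some u ∧ l.getLast? = some v ∧ (∀ w ∈ l, w ∈ lamVtx m n) ∧
      ∀ p ∈ cp l, ∃ e ∈ M, joins e p.1 p.2 := by
  induction huv using Relation.ReflTransGen.head_induction_on with
  | refl => exact ⟨[v], rfl, rfl, by simpa using hv, by simp [cp]⟩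
  | @head u w huw _ ih =>
    obtain ⟨_ | ⟨w', l⟩, hhead, hlast, hmem, hjoins⟩ := ih
    · simp at hhead
    · obtain rfl : w' = w := by simpa using hhead
      refine ⟨u :: w' :: l, rfl, by rwa [List.getLast?_cons_cons], ?_, ?_⟩
      · exact List.forall_mem_cons.2 ⟨huw.1, hmem⟩
      · exact List.forall_mem_cons.2 ⟨huw.2.2, hjoins⟩

/-- The vertices reached from the left-hand side along edges of `M`. -/
def reached (m n : ℕ) (M : Set Edge) : Set Vtx :=
  {v | ∃ u ∈ lamVtx m n, u.1 = 1 ∧ Relation.ReflTransGen (Linked m n M) u v}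

lemma hasCrossing_of_mem_reached (hv : v ∈ lamVtx m n) (hm : v.1 = m) (hr : v ∈ reached m n M) :
    HasCrossing m n M := by
  obtain ⟨u, -, hu, huv⟩ := hr
  obtain ⟨l, hhead, hlast, hl⟩ := exists_path_of_reflTransGen hv huv
  exact ⟨l, ⟨u, hhead, hu⟩, ⟨v, hlast, hm⟩, hl⟩

lemma Linked.indicator_reached_eq (huv : Linked m n M u v) :
    (reached m n M).indicator (1 : Vtx → ℤ) u = (reached m n M).indicator 1 v := by
  have hstep : ∀ {u v}, Linked m n M u v → u ∈ reached m n M → v ∈ reached m n M :=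
    fun huv => fun ⟨w, hw, hw', hreach⟩ => ⟨w, hw, hw', hreach.tail huv⟩
  by_cases hu : u ∈ reached m n M
  · rw [Set.indicator_of_mem hu, Set.indicator_of_mem (hstep huv hu)]
    rfl
  · rw [Set.indicator_of_notMem hu, Set.indicator_of_notMem fun hv => hu (hstep huv.symm hv)]

lemma horizontal_mem_sEdges :
    ((x, y), true) ∈ sEdges m n ↔ 1 ≤ x ∧ x < m ∧ 1 ≤ y ∧ y ≤ n := by
  simp only [sEdges, lamEdges, lamVtx, ends, Set.mem_ofPred_eq, if_true, Bool.true_eq_false,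
    false_and, not_false_eq_true, and_true]
  omega

lemma vertical_mem_sEdges :
    ((x, y), false) ∈ sEdges m n ↔ 1 < x ∧ x < m ∧ 1 ≤ y ∧ y < n := by
  simp only [sEdges, lamEdges, lamVtx, ends, Set.mem_ofPred_eq, Bool.false_eq_true, if_false,
    forall_const, not_and, not_or, le_add_iff_nonneg_left, Order.add_one_le_iff]
  omega

/-- A function on the faces equal to `0` below and `1` above the grid that changes only across
edges of `M`. -/
structure IsPotential (m n : ℕ) (M : Set Edge) (g : Vtx → ℤ) : Prop where
  bottom : ∀ x, g (x, 0) = 0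
  top : ∀ x, g (x, n) = 1
  mem_of_ne : ∀ e ∈ sEdges m n, g (backFace e) ≠ g e.1 → e ∈ M

/-- Summation by parts: the difference of the two sides telescopes. -/
lemma sum_mul_sub_eq_of_ne_imp_eq {R : Type*} [CommRing R] {N : ℕ} {w f g : ℕ → R}
    (h_zero : f 0 = g 0) (h_last : f N = g N)
    (hw : ∀ y, y + 1 < N → f (y + 1) ≠ g (y + 1) → w y = w (y + 1)) :
    ∑ y ∈ Finset.range N, w y * (f (y + 1) - f y) =
      ∑ y ∈ Finset.range N, w y * (g (y + 1) - g y) := by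
  rw [← sub_eq_zero, ← Finset.sum_sub_distrib]
  calc ∑ y ∈ Finset.range N, (w y * (f (y + 1) - f y) - w y * (g (y + 1) - g y))
      = ∑ y ∈ Finset.range N, (w (y + 1) * (f (y + 1) - g (y + 1)) - w y * (f y - g y)) := by
        refine Finset.sum_congr rfl fun y hy => ?_
        by_cases hfg : f (y + 1) = g (y + 1)
        · rw [hfg]
          ring
        · have hy' : y + 1 < N :=
            lt_of_le_of_ne (Finset.mem_range.1 hy) fun hN => hfg (hN ▸ h_last)
          rw [← hw y hy' hfg]
          ring
    _ = 0 := by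
        rw [Finset.sum_range_sub fun y => w y * (f y - g y), h_zero, h_last]
        ring

/-- The flow along the edges of `M` from the left into column `x + 1`, where the edge between two
adjacent faces carries the difference of their potentials. Only vertices reached from the left are
counted, which makes the flow of column `1` equal to `1`. -/
noncomputable def flux (m n : ℕ) (M : Set Edge) (g : Vtx → ℤ) (x : ℕ) : ℤ :=
  ∑ y ∈ Finset.range n, (reached m n M).indicator 1 ((x : ℤ) + 1, (y : ℤ) + 1) *
    (g (x, ((y + 1 : ℕ) : ℤ)) - g (x, (y : ℤ)))

lemma left_mem_reached (hm : 1 ≤ m) (hy : 1 ≤ y) (hy' : y ≤ n) : (1, y) ∈ reached m n M :=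
  ⟨(1, y), ⟨le_rfl, by simpa using hm, hy, hy'⟩, rfl, .refl⟩

lemma IsPotential.flux_zero (hg : IsPotential m n M g) (hm : 1 ≤ m) : flux m n M g 0 = 1 := by
  have hterm : flux m n M g 0 =
      ∑ y ∈ Finset.range n, (g (0, ((y + 1 : ℕ) : ℤ)) - g (0, (y : ℤ))) := by
    refine Finset.sum_congr rfl fun y hy => ?_
    have hy' := Finset.mem_range.1 hy
    rw [Nat.cast_zero, zero_add, Set.indicator_of_mem (left_mem_reached hm (by omega) (by omega)),
      Pi.one_apply, one_mul]
  rw [hterm, Finset.sum_range_sub (fun y : ℕ => g (0, (y : ℤ))), Nat.cast_zero, hg.bottom, hg.top,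
    sub_zero]

lemma IsPotential.indicator_reached_eq_horizontal (hg : IsPotential m n M g) (hx : 1 ≤ x)
    (hx' : x < m) (hy : 1 ≤ y) (hy' : y ≤ n) (hne : g (x, y - 1) ≠ g (x, y)) :
    (reached m n M).indicator (1 : Vtx → ℤ) (x, y) = (reached m n M).indicator 1 (x + 1, y) := by
  refine Linked.indicator_reached_eq ⟨⟨hx, hx'.le, hy, hy'⟩, ⟨by omega, hx', hy, hy'⟩,
    ((x, y), true), hg.mem_of_ne _ (horizontal_mem_sEdges.2 ⟨hx, hx', hy, hy'⟩) hne, ?_⟩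
  exact Or.inl ⟨rfl, rfl⟩

lemma IsPotential.indicator_reached_eq_vertical (hg : IsPotential m n M g) (hx : 1 < x)
    (hx' : x < m) (hy : 1 ≤ y) (hy' : y < n) (hne : g (x - 1, y) ≠ g (x, y)) :
    (reached m n M).indicator (1 : Vtx → ℤ) (x, y) = (reached m n M).indicator 1 (x, y + 1) := by
  refine Linked.indicator_reached_eq ⟨⟨hx.le, hx'.le, hy, hy'.le⟩, ⟨hx.le, hx'.le, by omega, hy'⟩,
    ((x, y), false), hg.mem_of_ne _ (vertical_mem_sEdges.2 ⟨hx, hx', hy, hy'⟩) hne, ?_⟩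
  exact Or.inl ⟨rfl, rfl⟩

lemma IsPotential.flux_succ (hg : IsPotential m n M g) {x : ℕ} (hx : x + 1 < m) :
    flux m n M g (x + 1) = flux m n M g x := by
  calc flux m n M g (x + 1)
      = ∑ y ∈ Finset.range n, (reached m n M).indicator 1 ((x : ℤ) + 1, (y : ℤ) + 1) *
          (g ((x + 1 : ℕ), ((y + 1 : ℕ) : ℤ)) - g ((x + 1 : ℕ), (y : ℤ))) := by
        refine Finset.sum_congr rfl fun y hy => ?_
        have hy' := Finset.mem_range.1 hy
        by_cases hgy : g ((x + 1 : ℕ), (y : ℤ)) = g ((x + 1 : ℕ), ((y + 1 : ℕ) : ℤ))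
        · rw [hgy, sub_self, mul_zero, mul_zero]
        · push_cast at hgy ⊢
          rw [hg.indicator_reached_eq_horizontal (x := x + 1) (y := y + 1) (by omega) (by omega)
            (by omega) (by omega) (by rwa [add_sub_cancel_right])]
    _ = flux m n M g x := by
        refine sum_mul_sub_eq_of_ne_imp_eq
          (w := fun y => (reached m n M).indicator 1 ((x : ℤ) + 1, (y : ℤ) + 1))
          (f := fun y => g ((x + 1 : ℕ), (y : ℤ))) (g := fun y => g ((x : ℤ), (y : ℤ)))
          (by simp [hg.bottom]) (by simp [hg.top]) fun y hy hne => ?_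
        rcases Nat.eq_zero_or_pos x with rfl | hpos
        · simp only [Nat.cast_zero, zero_add]
          rw [Set.indicator_of_mem (left_mem_reached (by omega) (by omega) (by omega)),
            Set.indicator_of_mem (left_mem_reached (by omega) (by omega) (by omega))]
          rfl
        · push_cast at hne ⊢
          exact hg.indicator_reached_eq_vertical (by omega) (by omega) (by omega) (by omega)
            (by rw [add_sub_cancel_right]; exact hne.symm)

/-- The flow through the grid from left to right is conserved, so it reaches the last column. -/
theorem IsPotential.hasCrossing (hg : IsPotential m n M g) (hm : 1 ≤ m) : HasCrossing m n M := by
  have hflux : ∀ x < m, flux m n M g x = 1 := fun x hx => by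
    induction x with
    | zero => exact hg.flux_zero hm
    | succ x ih => rw [hg.flux_succ hx, ih (by omega)]
  obtain ⟨y, hy, hne⟩ := Finset.exists_ne_zero_of_sum_ne_zero
    (ne_of_eq_of_ne (hflux (m - 1) (by omega)) one_ne_zero)
  have hreached := Set.mem_of_indicator_ne_zero (left_ne_zero_of_mul hne)
  have hy' := Finset.mem_range.1 hy
  exact hasCrossing_of_mem_reached (v := (((m - 1 : ℕ) : ℤ) + 1, (y : ℤ) + 1))
    ⟨by omega, by omega, by omega, by omega⟩ (by push_cast; omega) hreached

end Crossing

section Grid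

variable {m n : ℕ} {u v : Vtx} {d d' : Edge × Bool}

lemma lamEdges_finite (m n : ℕ) : (lamEdges m n).Finite := by
  refine ((Set.finite_Icc ((1 : ℤ), (1 : ℤ)) (m, n)).prod Set.finite_univ).subset ?_
  rintro ⟨v, b⟩ ⟨⟨hx, hx', hy, hy'⟩, -⟩
  exact ⟨⟨⟨hx, hy⟩, hx', hy'⟩, Set.mem_univ b⟩

/-- The edges of the grid that matter for crossings, those of `sEdges m n`, as a finset. -/
noncomputable def innerEdges (m n : ℕ) : Finset Edge :=
  ((lamEdges_finite m n).subset (Set.sep_subset _ _ : sEdges m n ⊆ lamEdges m n)).toFinset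

lemma mem_innerEdges {e : Edge} : e ∈ innerEdges m n ↔ e ∈ sEdges m n :=
  Set.Finite.mem_toFinset _

/-- Identifies all faces in or below row `0` with `(0, 0)` and all faces in or above row `n` with
`(0, n)`. -/
def capFace (n : ℕ) (v : Vtx) : Vtx :=
  if v.2 ≤ 0 then (0, 0) else if (n : ℤ) ≤ v.2 then (0, n) else v

/-- The planar dual of the grid, the dual edges of vertical edges being directed to the right. -/
def gridDual (n : ℕ) : DualGraph Edge Vtx where
  tail e := capFace n (backFace e)
  head e := capFace n e.1
  sign e := if e.2 then 0 else 1
  bot := (0, 0)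
  top := (0, n)

/-- The heights before the first move. -/
def initialHeight (n : ℕ) (v : Vtx) : ℤ := min v.2 n

lemma initialHeight_capFace (h_zero : 0 ≤ v.2) (h_le : v.2 ≤ n) :
    initialHeight n (capFace n v) = v.2 := by
  unfold initialHeight capFace
  split_ifs <;> grind

lemma capFace_eq_self (hbot : capFace n v ≠ (0, 0)) (htop : capFace n v ≠ (0, (n : ℤ))) :
    capFace n v = v := by
  unfold capFace at *
  split_ifs at * <;> simp_all

/-- The rank of a dart in the untouched grid: `1` down, `2` left, `3` up, `4` right. -/
def initialRank : Edge × Bool → ℕ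
  | ((_, true), true) => 3
  | ((_, true), false) => 1
  | ((_, false), true) => 4
  | ((_, false), false) => 2

lemma initialRank_pos (d : Edge × Bool) : 0 < initialRank d := by
  rcases d with ⟨⟨v, _ | _⟩, _ | _⟩ <;> simp [initialRank]

lemma initialHeight_head {e : Edge} (he : e ∈ sEdges m n) :
    initialHeight n ((gridDual n).head e) = e.1.2 := by
  obtain ⟨-, -, hy, hy'⟩ : e.1 ∈ lamVtx m n := he.1.1
  exact initialHeight_capFace (by omega) hy'

lemma initialHeight_tail {e : Edge} (he : e ∈ sEdges m n) :
    initialHeight n ((gridDual n).tail e) = if e.2 then e.1.2 - 1 else e.1.2 := by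
  obtain ⟨-, -, hy, hy'⟩ : e.1 ∈ lamVtx m n := he.1.1
  have hback : (backFace e).2 = if e.2 then e.1.2 - 1 else e.1.2 := by
    unfold backFace
    split_ifs <;> rfl
  rw [← hback]
  refine initialHeight_capFace ?_ ?_ <;> rw [hback] <;> split_ifs <;> omega

lemma stepRank_eq_initialRank (hd : d.1 ∈ sEdges m n) :
    stepRank ((gridDual n).dir d) (initialHeight n ((gridDual n).dst d) -
      initialHeight n ((gridDual n).src d)) = initialRank d := by
  rcases d with ⟨⟨v, _ | _⟩, _ | _⟩ <;>
    simp only [DualGraph.dst, DualGraph.src, cond_true, cond_false, initialHeight_head hd,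
      initialHeight_tail hd, if_true, Bool.false_eq_true, if_false, sub_self,
      sub_sub_cancel, sub_sub_cancel_left] <;> rfl

lemma dir_eq_of_initialRank_eq (hrank : initialRank d = initialRank d') :
    d.1.2 = d'.1.2 ∧ d.2 = d'.2 := by
  rcases d with ⟨⟨v, _ | _⟩, _ | _⟩ <;> rcases d' with ⟨⟨v', _ | _⟩, _ | _⟩ <;>
    first | exact ⟨rfl, rfl⟩ | simp [initialRank] at hrank

lemma backFace_injective (b : Bool) : Function.Injective fun v : Vtx => backFace (v, b) := by
  rintro ⟨x, y⟩ ⟨x', y'⟩ h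
  cases b <;> simp_all [backFace]

lemma capFace_inj (hbot : capFace n u ≠ (0, 0)) (htop : capFace n u ≠ (0, (n : ℤ)))
    (huv : capFace n u = capFace n v) : u = v := by
  rw [← capFace_eq_self hbot htop, huv, capFace_eq_self (huv ▸ hbot) (huv ▸ htop)]

lemma eq_of_src_eq_of_initialRank_eq (hsrc : (gridDual n).src d = (gridDual n).src d')
    (hbot : (gridDual n).src d ≠ (gridDual n).bot) (htop : (gridDual n).src d ≠ (gridDual n).top)
    (hrank : initialRank d = initialRank d') : d = d' := by
  obtain ⟨⟨v, b⟩, o⟩ := d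
  obtain ⟨⟨v', b'⟩, o'⟩ := d'
  obtain ⟨rfl, rfl⟩ : b = b' ∧ o = o' := dir_eq_of_initialRank_eq hrank
  cases o
  · obtain rfl : v = v' := capFace_inj hbot htop hsrc
    rfl
  · obtain rfl : v = v' := backFace_injective b (capFace_inj hbot htop hsrc)
    rfl

lemma harmless_of_src_eq_bot (hd : d.1 ∈ sEdges m n) (hbot : (gridDual n).src d = (0, 0)) :
    (gridDual n).Harmless (initialHeight n) d := by
  have hy : 1 ≤ d.1.1.2 := hd.1.1.2.2.1
  have hzero : initialHeight n ((gridDual n).src d) = 0 := by simp [hbot, initialHeight]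
  refine Or.inl ⟨?_, hzero.le⟩
  rcases d with ⟨⟨v, _ | _⟩, _ | _⟩ <;>
    simp only [DualGraph.src, cond_true, cond_false, initialHeight_head hd,
      initialHeight_tail hd, if_true, Bool.false_eq_true, if_false] at hzero hy
  · omega
  · omega
  · omega
  · rfl

lemma rank_initial_pos (hd : d.1 ∈ sEdges m n) :
    0 < (gridDual n).rank id (initialHeight n) d := by
  by_cases hbot : (gridDual n).src d = (gridDual n).bot
  · rw [DualGraph.rank_of_eq_bot hbot, if_pos (harmless_of_src_eq_bot hd hbot)]
    exact one_pos
  · rw [DualGraph.rank_of_ne_bot hbot]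
    exact (initialRank_pos d).trans_eq (stepRank_eq_initialRank hd).symm

/-- In the untouched grid each interior face has one exit of each rank `1`, `2`, `3`, `4`. -/
lemma bounded_initial (m n : ℕ) :
    (gridDual n).Bounded (innerEdges m n) id (initialHeight n) 0 := by
  rintro c i ⟨-, hi⟩
  rw [Multiset.count_zero, add_zero]
  have hmem : ∀ d ∈ (gridDual n).exitsLE (innerEdges m n) id (initialHeight n) i c,
      d.1 ∈ sEdges m n ∧ (gridDual n).src d = c ∧
        (gridDual n).rank id (initialHeight n) d ≤ i := fun d hd =>
    have hd := DualGraph.mem_exitsLE.1 hd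
    ⟨mem_innerEdges.1 (DualGraph.mem_exits.1 hd.1).1, (DualGraph.mem_exits.1 hd.1).2.1, hd.2⟩
  by_cases hc : c = (gridDual n).bot ∨ c = (gridDual n).top
  · rw [hi hc, Nat.le_zero, Finset.card_eq_zero, Finset.eq_empty_iff_forall_notMem]
    intro d hd
    obtain ⟨hd, -, hrank⟩ := hmem d (hi hc ▸ hd)
    exact (rank_initial_pos hd).not_ge (hrank.trans_eq (hi hc))
  · obtain ⟨hbot, htop⟩ := not_or.1 hc
    calc _ ≤ (Finset.Icc 1 i).card := Finset.card_le_card_of_injOn initialRank ?_ ?_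
      _ = i := by simp
    · intro d hd
      obtain ⟨hedge, rfl, hrank⟩ := hmem d hd
      rw [DualGraph.rank_of_ne_bot hbot] at hrank
      exact Finset.mem_Icc.2
        ⟨initialRank_pos d, (stepRank_eq_initialRank hedge).symm.trans_le hrank⟩
    · intro d hd d' hd' heq
      obtain ⟨-, rfl, -⟩ := hmem d hd
      obtain ⟨-, hsrc, -⟩ := hmem d' hd'
      exact eq_of_src_eq_of_initialRank_eq hsrc.symm hbot htop heq

lemma isTerrain_initial (hn : 1 ≤ n) : (gridDual n).IsTerrain n id (initialHeight n) where
  height_eq u v huv _ := congrArg _ huv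
  height_top := min_self _
  height_le v := min_le_right _ _
  bot_ne_top h := by
    have : (0 : ℤ) = n := congrArg Prod.snd h
    omega

end Grid

section Secured

variable {m n p q : ℕ} {M M' B F : Finset Edge}

/-- The position with Maker's edges `M` and Breaker's edges `B` satisfies Maker's invariant: the
components of the dual graph formed by Breaker's edges carry heights for which few exits of low
rank are left unclaimed by Maker. -/
def Secured (m n : ℕ) (M B : Finset Edge) : Prop :=
  ∃ r h, (gridDual n).IsTerrain n r h ∧ (gridDual n).Bounded (innerEdges m n \ M) r h 0 ∧
    ∀ e ∈ B, e ∈ innerEdges m n → r ((gridDual n).tail e) = r ((gridDual n).head e)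

lemma secured_empty (hn : 1 ≤ n) : Secured m n ∅ ∅ :=
  ⟨id, initialHeight n, isTerrain_initial hn, by simpa using bounded_initial m n, by simp⟩

lemma Secured.mono (hS : Secured m n M B) (hM : M ⊆ M') : Secured m n M' B :=
  let ⟨r, h, hT, hB, hr⟩ := hS
  ⟨r, h, hT, hB.anti (Finset.sdiff_subset_sdiff subset_rfl hM), hr⟩

lemma Secured.exists_reply (hS : Secured m n M B) (hFM : Disjoint F M) (hF : F.card < n) :
    ∃ D ⊆ innerEdges m n, Disjoint D (M ∪ (B ∪ F)) ∧ D.card ≤ 2 * F.card ∧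
      Secured m n (M ∪ D) (B ∪ F) := by
  obtain ⟨r, h, hT, hB, hr⟩ := hS
  have hle : (F ∩ innerEdges m n).card ≤ F.card := Finset.card_le_card Finset.inter_subset_left
  have hsub : F ∩ innerEdges m n ⊆ innerEdges m n \ M := fun e he =>
    have he := Finset.mem_inter.1 he
    Finset.mem_sdiff.2 ⟨he.2, Finset.disjoint_left.1 hFM he.1⟩
  obtain ⟨r', h', D, hfactor, hF', hD, hcard, hT', hB'⟩ :=
    DualGraph.exists_reply hT hB hsub (by omega)
  have hr' : ∀ e ∈ B ∪ F, e ∈ innerEdges m n →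
      r' ((gridDual n).tail e) = r' ((gridDual n).head e) := fun e he hinner =>
    (Finset.mem_union.1 he).elim (fun he => hfactor (hr e he hinner))
      fun he => hF' e (Finset.mem_inter.2 ⟨he, hinner⟩)
  have hDM : ∀ e ∈ D, e ∈ innerEdges m n \ M := fun e he => (DualGraph.mem_separated.1 (hD he)).1
  refine ⟨D, fun e he => (Finset.mem_sdiff.1 (hDM e he)).1, ?_, by omega, r', h', hT', ?_, hr'⟩
  · refine Finset.disjoint_union_right.2 ⟨?_, ?_⟩
    · exact Finset.disjoint_left.2 fun e he => (Finset.mem_sdiff.1 (hDM e he)).2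
    · exact Finset.disjoint_left.2 fun e he heB => (DualGraph.mem_separated.1 (hD he)).2
        (hr' e heB (Finset.mem_sdiff.1 (hDM e he)).1)
  · rwa [← Finset.sup_eq_union, ← sdiff_sdiff_left]

lemma Secured.hasCrossing (hS : Secured m n M B) (hm : 1 ≤ m) (hn : 1 ≤ n)
    (hfull : lamEdges m n ⊆ ↑(M ∪ B)) : HasCrossing m n M := by
  obtain ⟨r, h, hT, -, hr⟩ := hS
  have hpotential : IsPotential m n M
      fun v => if r (capFace n v) = r (gridDual n).top then 1 else 0 :=
    { bottom := fun x => by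
        have hx : capFace n (x, 0) = (gridDual n).bot := if_pos le_rfl
        rw [hx, if_neg hT.bot_ne_top]
      top := fun x => by
        have hx : capFace n (x, n) = (gridDual n).top :=
          (if_neg (show ¬ (n : ℤ) ≤ 0 by omega)).trans (if_pos le_rfl)
        rw [hx, if_pos rfl]
      mem_of_ne := fun e he hne => by
        refine (Finset.mem_union.1 (hfull he.1)).resolve_right fun heB => hne ?_
        have hlabel : r (capFace n (backFace e)) = r (capFace n e.1) :=
          hr e heB (mem_innerEdges.2 he)
        rw [hlabel] }
  exact hpotential.hasCrossing hm

theorem isMakerInvariant_secured (hm : 1 ≤ m) (hp : 2 * q ≤ p) (hn : q + 1 ≤ n) :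
    IsMakerInvariant (lamEdges m n) (HasCrossing m n) p q (Secured m n) where
  start := secured_empty (by omega)
  mono _ _ _ hM hS := hS.mono hM
  reply M B F hS _ hFM hF := by
    obtain ⟨D, hD, hdisj, hcard, hS'⟩ := hS.exists_reply hFM (by omega)
    exact ⟨D, fun e he => (mem_innerEdges.1 (hD he)).1, hdisj, by omega, hS'⟩
  win _ _ hS hfull := hS.hasCrossing hm (by omega) hfull

end Secured

/-- **Theorem 1 (Day–Falgas-Ravry).** Let `m, n, p, q` be (positive) natural numbers.
If `p ≥ 2q` and `n ≥ q + 1`, then Maker has a winning strategy for the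
`(p,q)`-crossing game on `Λ_{m×n}`. -/
theorem maker_wins_crossing_game_on_lambda
    (m n p q : ℕ) (hm : 1 ≤ m) (hq : 1 ≤ q)
    (hp : 2 * q ≤ p) (hn : q + 1 ≤ n) :
    MakerWins (lamEdges m n) (HasCrossing m n) p q := by
  exact (isMakerInvariant_secured hm hp hn).makerWins (lamEdges_finite m n) (by omega)

end CrossingGames
end

section
/- Let k ∈ ℕ. If A is a set of k edges of the square integer lattice ℤ² forming a connected subgraph with vertex set C, then the external boundary ∂^∞C contains at most 2k+4 dual edges; equivalently, the number of lattice edges with one endpoint in C and the other endpoint in the infinite component C_∞ is at most 2k+4. -/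
namespace CrossingGames

/-- The vertex set spanned by a set of lattice edges. -/
def vtxSet (A : Set Edge) : Set Vtx := {v | ∃ e ∈ A, (ends e).1 = v ∨ (ends e).2 = v}

/-- `u` and `v` are joined by a walk all of whose edges lie in `A`. -/
def ReachVia (A : Set Edge) (u v : Vtx) : Prop :=
  Relation.ReflTransGen (fun a b => ∃ e ∈ A, joins e a b) u v

/-- `u` is joined to `v` by a lattice walk avoiding the vertex set `C`
(all vertices after the starting one lie outside `C`). -/
def ReachAvoiding (C : Set Vtx) (u v : Vtx) : Prop :=
  Relation.ReflTransGen (fun a b => b ∉ C ∧ ∃ e : Edge, joins e a b) u v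

/-- The infinite component `C_∞` of the subgraph of the lattice induced by `ℤ² \ C`:
the set of vertices outside `C` whose connected component in that subgraph is infinite
(for `C` the vertex set of a finite connected subgraph this is the unique infinite
component). -/
def infComp (C : Set Vtx) : Set Vtx :=
  {w | w ∉ C ∧ {u | ReachAvoiding C w u}.Infinite}

/-!
Every lattice vertex has degree four, so counting incidences between edges and `C` gives
`|∂C| + 2 |E(C)| = 4 |C|`, where `∂C` is the full edge boundary of `C` and `E(C)` the set of edges
with both endpoints in `C`. Here `|E(C)| ≥ k`, and `|C| ≤ k + 1` because a connected graph has at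
most one more vertex than edges, whence `|∂C| ≤ 4 (k + 1) - 2 k`. The external boundary of `C` is
part of `∂C`.
-/

open scoped symmDiff

theorem encard_symmDiff_add_two_mul_encard_inter {α : Type*} (s t : Set α) :
    (s ∆ t).encard + 2 * (s ∩ t).encard = s.encard + t.encard := by
  rw [Set.symmDiff_def, Set.encard_union_eq disjoint_sdiff_sdiff,
    ← Set.encard_sdiff_add_encard_inter s t, ← Set.encard_sdiff_add_encard_inter t s,
    Set.inter_comm t s]
  ring

section ConnectedGraph

variable {V : Type*} {G : SimpleGraph V}

theorem ncard_supp_le_ncard_edgeSet_add_one [Finite G.edgeSet] (c : G.ConnectedComponent) :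
    c.supp.ncard ≤ G.edgeSet.ncard + 1 :=
  c.connected_toSimpleGraph.card_vert_le_card_edgeSet_add_one.trans <|
    Nat.add_le_add_right (Nat.card_le_card_of_injective _
      (SimpleGraph.Embedding.induce c.supp).mapEdgeSet.injective) 1

theorem mem_support_of_reachable {u v : V} (hu : u ∈ G.support) (h : G.Reachable v u) :
    v ∈ G.support := by
  rw [SimpleGraph.reachable_iff_reflTransGen] at h
  obtain rfl | ⟨w, hvw, -⟩ := h.cases_head
  · exact hu
  · exact hvw.mem_support_left

theorem ncard_support_le_ncard_edgeSet_add_one [Finite G.edgeSet]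
    (hG : ∀ u ∈ G.support, ∀ v ∈ G.support, G.Reachable u v) :
    G.support.ncard ≤ G.edgeSet.ncard + 1 := by
  obtain hempty | ⟨u, hu⟩ := G.support.eq_empty_or_nonempty
  · simp [hempty]
  · have hsupp : (G.connectedComponentMk u).supp = G.support := by
      ext v
      rw [SimpleGraph.ConnectedComponent.mem_supp_iff, SimpleGraph.ConnectedComponent.eq]
      exact ⟨mem_support_of_reachable hu, fun hv ↦ hG v hv u hu⟩
    exact hsupp ▸ ncard_supp_le_ncard_edgeSet_add_one (G.connectedComponentMk u)

end ConnectedGraph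

/-- The subgraph of the square lattice with edge set `A`, as a simple graph on all of `ℤ²`;
vertices outside `vtxSet A` are isolated. -/
def edgeGraph (A : Set Edge) : SimpleGraph Vtx :=
  SimpleGraph.fromEdgeSet ((fun e ↦ s((ends e).1, (ends e).2)) '' A)

theorem ends_fst_ne_snd (e : Edge) : (ends e).1 ≠ (ends e).2 := by
  obtain ⟨⟨x, y⟩, b⟩ := e
  cases b <;> simp [ends]

theorem edgeGraph_adj {A : Set Edge} {u v : Vtx} :
    (edgeGraph A).Adj u v ↔ ∃ e ∈ A, joins e u v := by
  simp only [edgeGraph, SimpleGraph.fromEdgeSet_adj, Set.mem_image, Sym2.eq_iff, joins]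
  refine and_iff_left_of_imp ?_
  rintro ⟨e, -, ⟨rfl, rfl⟩ | ⟨rfl, rfl⟩⟩
  · exact ends_fst_ne_snd e
  · exact (ends_fst_ne_snd e).symm

theorem support_edgeGraph (A : Set Edge) : (edgeGraph A).support = vtxSet A := by
  ext v
  simp only [SimpleGraph.mem_support, edgeGraph_adj, vtxSet, Set.mem_ofPred_eq, joins]
  grind

theorem edgeGraph_reachable {A : Set Edge} {u v : Vtx} :
    (edgeGraph A).Reachable u v ↔ ReachVia A u v := by
  have hadj : (edgeGraph A).Adj = fun a b ↦ ∃ e ∈ A, joins e a b := by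
    ext a b
    exact edgeGraph_adj
  rw [SimpleGraph.reachable_iff_reflTransGen, hadj, ReachVia]

theorem edgeSet_edgeGraph_subset (A : Set Edge) :
    (edgeGraph A).edgeSet ⊆ (fun e ↦ s((ends e).1, (ends e).2)) '' A := by
  rw [edgeGraph, SimpleGraph.edgeSet_fromEdgeSet]
  exact Set.sdiff_subset

theorem finite_vtxSet {A : Set Edge} (hA : A.Finite) : (vtxSet A).Finite := by
  refine ((hA.image fun e ↦ (ends e).1).union (hA.image fun e ↦ (ends e).2)).subset ?_
  rintro v ⟨e, he, hv | hv⟩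
  · exact Or.inl ⟨e, he, hv⟩
  · exact Or.inr ⟨e, he, hv⟩

theorem encard_vtxSet_le_encard_add_one {A : Set Edge}
    (hconn : ∀ u ∈ vtxSet A, ∀ v ∈ vtxSet A, ReachVia A u v) :
    (vtxSet A).encard ≤ A.encard + 1 := by
  obtain hA | hA := A.finite_or_infinite
  · have himage := hA.image fun e ↦ s((ends e).1, (ends e).2)
    have : Finite (edgeGraph A).edgeSet := himage.subset (edgeSet_edgeGraph_subset A)
    have hcard : (vtxSet A).ncard ≤ A.ncard + 1 := calc
      (vtxSet A).ncard = (edgeGraph A).support.ncard := by rw [support_edgeGraph]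
      _ ≤ (edgeGraph A).edgeSet.ncard + 1 := ncard_support_le_ncard_edgeSet_add_one <| by
        simpa only [support_edgeGraph, edgeGraph_reachable] using hconn
      _ ≤ A.ncard + 1 := Nat.add_le_add_right
        ((Set.ncard_le_ncard (edgeSet_edgeGraph_subset A) himage).trans (Set.ncard_image_le hA)) 1
    rw [← (finite_vtxSet hA).cast_ncard_eq, ← hA.cast_ncard_eq]
    exact_mod_cast hcard
  · simp [hA.encard_eq]

/-- The edge boundary of `C`: the lattice edges with exactly one endpoint in `C`. Unlike in the
external boundary, the other endpoint may lie in any component of the complement of `C`. -/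
def edgeBoundary (C : Set Vtx) : Set Edge :=
  {e | (ends e).1 ∈ C} ∆ {e | (ends e).2 ∈ C}

/-- The external boundary `∂^∞ C`, each dual edge being represented by the lattice edge it
crosses. -/
def externalBoundary (C : Set Vtx) : Set Edge :=
  {e | ((ends e).1 ∈ C ∧ (ends e).2 ∈ infComp C) ∨ ((ends e).2 ∈ C ∧ (ends e).1 ∈ infComp C)}

theorem externalBoundary_subset_edgeBoundary (C : Set Vtx) :
    externalBoundary C ⊆ edgeBoundary C :=
  fun _ he ↦ he.imp (And.imp_right And.left) (And.imp_right And.left)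

/-- The edges of the subgraph of the lattice induced by `C`. -/
def inducedEdges (C : Set Vtx) : Set Edge :=
  {e | (ends e).1 ∈ C ∧ (ends e).2 ∈ C}

theorem subset_inducedEdges_vtxSet (A : Set Edge) : A ⊆ inducedEdges (vtxSet A) :=
  fun e he ↦ ⟨⟨e, he, Or.inl rfl⟩, ⟨e, he, Or.inr rfl⟩⟩

theorem encard_prod_bool {α : Type*} (s : Set α) :
    (s ×ˢ (Set.univ : Set Bool)).encard = 2 * s.encard := by
  rw [Set.encard_prod, Set.encard_univ, ENat.card_eq_coe_fintype_card, Fintype.card_bool,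
    Nat.cast_ofNat, mul_comm]

theorem encard_setOf_ends_fst_mem (C : Set Vtx) : {e | (ends e).1 ∈ C}.encard = 2 * C.encard := by
  rw [← encard_prod_bool]
  congr 1
  ext e
  simp [ends]

theorem bijective_ends_snd_prod_dir : Function.Bijective fun e : Edge ↦ ((ends e).2, e.2) := by
  refine Function.bijective_iff_has_inverse.2
    ⟨fun p ↦ (if p.2 then (p.1.1 - 1, p.1.2) else (p.1.1, p.1.2 - 1), p.2), ?_, ?_⟩ <;>
  · rintro ⟨⟨x, y⟩, b⟩
    cases b <;> simp [ends]

theorem encard_setOf_ends_snd_mem (C : Set Vtx) : {e | (ends e).2 ∈ C}.encard = 2 * C.encard := by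
  rw [← encard_prod_bool,
    ← Set.encard_preimage_of_bijective bijective_ends_snd_prod_dir (C ×ˢ Set.univ)]
  congr 1
  ext e
  simp

theorem encard_edgeBoundary_add_two_mul_encard_inducedEdges (C : Set Vtx) :
    (edgeBoundary C).encard + 2 * (inducedEdges C).encard = 4 * C.encard := calc
  _ = {e | (ends e).1 ∈ C}.encard + {e | (ends e).2 ∈ C}.encard :=
    encard_symmDiff_add_two_mul_encard_inter {e | (ends e).1 ∈ C} {e | (ends e).2 ∈ C}
  _ = 4 * C.encard := by
    rw [encard_setOf_ends_fst_mem, encard_setOf_ends_snd_mem]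
    ring

theorem isoperimetric_lemma_general (A : Finset Edge)
    (hconn : ∀ u ∈ vtxSet ↑A, ∀ v ∈ vtxSet ↑A, ReachVia ↑A u v) :
    (edgeBoundary (vtxSet ↑A)).encard ≤ ↑(2 * A.card + 4) := by
  have hdouble : (edgeBoundary (vtxSet ↑A)).encard + 2 * A.card
      ≤ ↑(2 * A.card + 4) + 2 * A.card := calc
    _ ≤ (edgeBoundary (vtxSet ↑A)).encard + 2 * (inducedEdges (vtxSet ↑A)).encard := by
      rw [← Set.encard_coe_eq_coe_finsetCard A]
      gcongr
      exact subset_inducedEdges_vtxSet ↑A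
    _ = 4 * (vtxSet ↑A).encard := encard_edgeBoundary_add_two_mul_encard_inducedEdges _
    _ ≤ 4 * (A.card + 1) := by
      rw [← Set.encard_coe_eq_coe_finsetCard A]
      gcongr
      exact encard_vtxSet_le_encard_add_one hconn
    _ = ↑(2 * A.card + 4) + 2 * A.card := by
      push_cast
      ring
  refine (ENat.add_le_add_iff_right ?_).1 hdouble
  exact_mod_cast ENat.natCast_ne_top (2 * A.card)

/-- **Isoperimetric Lemma.** If `A` is a set of `k ≥ 1` edges of the lattice `ℤ²`
forming a connected subgraph with vertex set `C`, then the external boundary `∂^∞ C`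
contains at most `2k + 4` dual edges; equivalently, the number of lattice edges with one
endpoint in `C` and the other in the infinite component `C_∞` is at most `2k + 4`. -/
theorem isoperimetric_lemma (k : ℕ) (hk : 1 ≤ k) (A : Finset Edge) (hcard : A.card = k)
    (hconn : ∀ u ∈ vtxSet ↑A, ∀ v ∈ vtxSet ↑A, ReachVia ↑A u v) :
    {e : Edge |
        ((ends e).1 ∈ vtxSet ↑A ∧ (ends e).2 ∈ infComp (vtxSet ↑A)) ∨
        ((ends e).2 ∈ vtxSet ↑A ∧ (ends e).1 ∈ infComp (vtxSet ↑A))}.ncard ≤ 2 * k + 4 := by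
  subst hcard
  exact ENat.toNat_le_of_le_natCast <| (Set.encard_le_encard
    (externalBoundary_subset_edgeBoundary (vtxSet ↑A))).trans (isoperimetric_lemma_general A hconn)

end CrossingGames
end
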